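/- (ℬ, ⋆, ε, Δ, ε*) is a Hopf algebra: it is a bialgebra, and there exists a ℂ-linear map S : ℬ → ℬ (an antipode) such that μ ∘ (S ⊗ id) ∘ Δ = η ∘ ε* = μ ∘ (id ⊗ S) ∘ Δ, where μ : ℬ ⊗ ℬ → ℬ is the linear map induced by ⋆ and η : ℂ → ℬ sends 1 to the empty B-diagram ε. -/

import Mathlib

open scoped BigOperators

structure BD where
  lam : List ℕ
  up : Finset ℕ
  dn : Finset ℕ
  ed : Finset (ℕ × ℕ)
deriving DecidableEq

namespace BD

/-- number of vertices -/
def nv (G : BD) : ℕ := G.lam.length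

/-- number of half-edges -/
def omega (G : BD) : ℕ := G.lam.sum

/-- the vertex to which a half-edge belongs -/
def v (G : BD) (k : ℕ) : ℕ :=
  (List.range G.lam.length).countP (fun i => (G.lam.take i).sum < k)

def Valid (G : BD) : Prop :=
  (∀ x ∈ G.lam, 0 < x) ∧
  G.up ⊆ Finset.Icc 1 G.omega ∧
  G.dn ⊆ Finset.Icc 1 G.omega ∧
  (∀ p ∈ G.ed, p.1 ∈ G.up ∧ p.2 ∈ G.dn ∧ G.v p.1 < G.v p.2) ∧
  (∀ p ∈ G.ed, ∀ q ∈ G.ed, p.1 = q.1 → p = q) ∧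
  (∀ p ∈ G.ed, ∀ q ∈ G.ed, p.2 = q.2 → p = q)

def eps : BD := ⟨[], ∅, ∅, ∅⟩

theorem eps_valid : eps.Valid := by
  refine ⟨?_, ?_, ?_, ?_, ?_, ?_⟩ <;> simp [eps, Valid, omega]

def HfUp (G : BD) : Finset ℕ := G.up \ G.ed.image Prod.fst
def HfDn (G : BD) : Finset ℕ := G.dn \ G.ed.image Prod.snd
def hfUp (G : BD) : ℕ := G.HfUp.card
def hfDn (G : BD) : ℕ := G.HfDn.card
def hc (G : BD) : ℕ :=
  (G.omega - G.ed.card - G.hfUp) + (G.omega - G.ed.card - G.hfDn)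

/-- composition of `G'` over `G` along a matching `s` -/
def comp (G G' : BD) (s : Finset (ℕ × ℕ)) : BD where
  lam := G.lam ++ G'.lam
  up := G.up ∪ G'.up.image (· + G.omega)
  dn := G.dn ∪ G'.dn.image (· + G.omega)
  ed := G.ed ∪ s.image (fun p => (p.1, p.2 + G.omega)) ∪
        G'.ed.image (fun p => (p.1 + G.omega, p.2 + G.omega))

/-- `s` encodes a strictly increasing sequence `a₁ < ⋯ < a_k` of elements of `H_f↑(G)`
matched with pairwise distinct elements `b₁,…,b_k` of `H_f↓(G')`. -/
def Matching (G G' : BD) (s : Finset (ℕ × ℕ)) : Prop :=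
  (∀ p ∈ s, p.1 ∈ G.HfUp ∧ p.2 ∈ G'.HfDn) ∧
  (∀ p ∈ s, ∀ q ∈ s, p.1 = q.1 → p = q) ∧
  (∀ p ∈ s, ∀ q ∈ s, p.2 = q.2 → p = q)

open scoped Classical in
noncomputable def matchings (G G' : BD) : Finset (Finset (ℕ × ℕ)) :=
  (G.HfUp ×ˢ G'.HfDn).powerset.filter (fun s => Matching G G' s)

/-- juxtaposition -/
def juxt (G G' : BD) : BD := comp G G' ∅

def Indiv (G : BD) : Prop :=
  ∀ G₁ G₂ : BD, G₁.Valid → G₂.Valid → G = juxt G₁ G₂ → G₁ = G ∨ G₂ = G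

/-- half-edges attached to the vertices in `I` -/
def HI (G : BD) (I : Finset ℕ) : Finset ℕ :=
  (Finset.Icc 1 G.omega).filter (fun k => G.v k ∈ I)

/-- the increasing relabelling bijection -/
def phi (G : BD) (I : Finset ℕ) (k : ℕ) : ℕ := ((G.HI I).filter (· ≤ k)).card

/-- sub-B-diagram on the set of vertices `I` -/
def sub (G : BD) (I : Finset ℕ) : BD where
  lam := ((List.range G.lam.length).filter (fun i => i + 1 ∈ I)).map (fun i => G.lam.getD i 0)
  up := (G.up ∩ G.HI I).image (G.phi I)
  dn := (G.dn ∩ G.HI I).image (G.phi I)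
  ed := (G.ed.filter (fun p => G.v p.1 ∈ I ∧ G.v p.2 ∈ I)).image
          (fun p => (G.phi I p.1, G.phi I p.2))

def Isolated (G : BD) (I : Finset ℕ) : Prop :=
  ∀ p ∈ G.ed, (G.v p.1 ∈ I ↔ G.v p.2 ∈ I)

def Connected (G : BD) : Prop :=
  ∀ i j : ℕ, 1 ≤ i → i < j → j ≤ G.nv →
    ∃ (k : ℕ) (c : Fin (k + 1) → ℕ × ℕ),
      (∀ ℓ, c ℓ ∈ G.ed) ∧
      (i = G.v (c 0).1 ∨ i = G.v (c 0).2) ∧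
      (j = G.v (c (Fin.last k)).1 ∨ j = G.v (c (Fin.last k)).2) ∧
      ∀ ℓ : Fin k,
        G.v (c ℓ.castSucc).1 = G.v (c ℓ.succ).1 ∨ G.v (c ℓ.castSucc).1 = G.v (c ℓ.succ).2 ∨
        G.v (c ℓ.castSucc).2 = G.v (c ℓ.succ).1 ∨ G.v (c ℓ.castSucc).2 = G.v (c ℓ.succ).2

def IsConnComp (G : BD) (I : Finset ℕ) : Prop :=
  I ⊆ Finset.Icc 1 G.nv ∧ I.Nonempty ∧ (G.sub I).Connected ∧
  ∀ J : Finset ℕ, I ⊆ J → J ⊆ Finset.Icc 1 G.nv → (G.sub J).Connected → J = I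

end BD

open scoped TensorProduct

/-- B-diagrams -/
abbrev BDiagram := {G : BD // G.Valid}

/-- the free `ℂ`-vector space on the set of B-diagrams -/
abbrev BSpace := BDiagram →₀ ℂ

open scoped Classical in
noncomputable def mkB (G : BD) : BSpace :=
  if h : G.Valid then Finsupp.single ⟨G, h⟩ 1 else 0

noncomputable def unitB : BSpace := Finsupp.single ⟨BD.eps, BD.eps_valid⟩ 1

noncomputable def liftB {V : Type*} [AddCommMonoid V] [Module ℂ V] (f : BDiagram → V) :
    BSpace →ₗ[ℂ] V :=
  Finsupp.lsum ℂ fun A => LinearMap.toSpanSingleton ℂ V (f A)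

noncomputable def mulfun (A B : BDiagram) : BSpace :=
  ∑ s ∈ BD.matchings A.1 B.1, mkB (BD.comp A.1 B.1 s)

/-- the product ⋆ of the algebra of B-diagrams, as a bilinear map -/
noncomputable def starB : BSpace →ₗ[ℂ] BSpace →ₗ[ℂ] BSpace :=
  liftB fun A => liftB fun B => mulfun A B

open scoped Classical in
/-- the coproduct evaluated on a B-diagram -/
noncomputable def dfun (A : BDiagram) : BSpace ⊗[ℂ] BSpace :=
  ∑ I ∈ (Finset.Icc 1 A.1.nv).powerset.filter (fun I => A.1.Isolated I),
    mkB (A.1.sub I) ⊗ₜ[ℂ] mkB (A.1.sub (Finset.Icc 1 A.1.nv \ I))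

/-- the coproduct Δ of ℬ -/
noncomputable def deltaL : BSpace →ₗ[ℂ] BSpace ⊗[ℂ] BSpace := liftB dfun

/-- the counit of ℬ -/
noncomputable def counitB : BSpace →ₗ[ℂ] ℂ :=
  liftB fun A => if A.1 = BD.eps then (1 : ℂ) else 0

/-- the product of ℬ as a linear map on the tensor square -/
noncomputable def muB : BSpace ⊗[ℂ] BSpace →ₗ[ℂ] BSpace := TensorProduct.lift starB

/-- the componentwise product `(x ⊗ y) ⋆ (x' ⊗ y') = (x ⋆ x') ⊗ (y ⋆ y')` on ℬ ⊗ ℬ -/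
noncomputable def star2 (x y : BSpace ⊗[ℂ] BSpace) : BSpace ⊗[ℂ] BSpace :=
  TensorProduct.map muB muB
    (TensorProduct.tensorTensorTensorComm ℂ BSpace BSpace BSpace BSpace (x ⊗ₜ[ℂ] y))



namespace BDH

def rank (s : Finset ℕ) (k : ℕ) : ℕ := (s.filter (· ≤ k)).card

theorem rank_lt {s : Finset ℕ} {a b : ℕ} (hb : b ∈ s) (h : a < b) : rank s a < rank s b := by
  apply Finset.card_lt_card
  rw [Finset.ssubset_iff_of_subset]
  · exact ⟨b, by simp [hb], by simp [h]⟩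
  · intro x; simp only [Finset.mem_filter]; rintro ⟨h1, h2⟩; exact ⟨h1, by omega⟩

theorem rank_inj {s : Finset ℕ} {a b : ℕ} (ha : a ∈ s) (hb : b ∈ s) :
    rank s a = rank s b ↔ a = b := by
  constructor
  · intro h
    rcases lt_trichotomy a b with h1 | h1 | h1
    · have := rank_lt hb h1; omega
    · exact h1
    · have := rank_lt ha h1; omega
  · rintro rfl; rfl

theorem rank_le_iff {s : Finset ℕ} {a b : ℕ} (ha : a ∈ s) :
    rank s a ≤ rank s b ↔ a ≤ b := by
  constructor
  · intro h; by_contra h1; have := rank_lt ha (not_le.1 h1); omega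
  · intro h; apply Finset.card_le_card
    intro x; simp only [Finset.mem_filter]; rintro ⟨h1, h2⟩; exact ⟨h1, by omega⟩

theorem rank_pos {s : Finset ℕ} {a : ℕ} (ha : a ∈ s) : 1 ≤ rank s a :=
  Finset.card_pos.2 ⟨a, by simp [ha]⟩

theorem rank_le_card (s : Finset ℕ) (a : ℕ) : rank s a ≤ s.card :=
  Finset.card_le_card (Finset.filter_subset _ _)

theorem rank_image (s : Finset ℕ) : s.image (rank s) = Finset.Icc 1 s.card := by
  apply Finset.eq_of_subset_of_card_le
  · intro x; simp only [Finset.mem_image, Finset.mem_Icc]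
    rintro ⟨a, ha, rfl⟩; exact ⟨rank_pos ha, rank_le_card s a⟩
  · rw [Finset.card_image_of_injOn]
    · simp
    · intro a ha b hb h; exact (rank_inj ha hb).1 h

theorem rank_rank {s t : Finset ℕ} (hts : t ⊆ s) {k : ℕ} :
    rank (t.image (rank s)) (rank s k) = rank t k := by
  unfold rank
  rw [Finset.filter_image, Finset.card_image_of_injOn]
  · congr 1; apply Finset.filter_congr; intro x hx; exact rank_le_iff (hts hx)
  · intro a ha b hb h
    simp only [Finset.coe_filter, Set.mem_ofPred_eq] at ha hb
    exact (rank_inj (hts ha.1) (hts hb.1)).1 h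

theorem rank_Icc {n k : ℕ} (h : k ≤ n) : rank (Finset.Icc 1 n) k = k := by
  unfold rank
  have : (Finset.Icc 1 n).filter (· ≤ k) = Finset.Icc 1 k := by ext; simp; omega
  rw [this]; simp

def vL (l : List ℕ) (k : ℕ) : ℕ := (List.range l.length).countP (fun i => (l.take i).sum < k)
def HL (l : List ℕ) (I : Finset ℕ) : Finset ℕ := (Finset.Icc 1 l.sum).filter (fun k => vL l k ∈ I)
def sL (l : List ℕ) (I : Finset ℕ) : List ℕ :=
  ((List.range l.length).filter (fun i => i + 1 ∈ I)).map (fun i => l.getD i 0)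

theorem take_sum_le (l : List ℕ) (i : ℕ) : (l.take i).sum ≤ l.sum := by
  have := congrArg List.sum (List.take_append_drop i l)
  rw [List.sum_append] at this; omega

theorem vL_append_left {l l' : List ℕ} {k : ℕ} (h : k ≤ l.sum) : vL (l ++ l') k = vL l k := by
  unfold vL
  rw [List.length_append, List.range_add, List.countP_append]
  have h1 : List.countP (fun i => decide (((l ++ l').take i).sum < k))
      ((List.range l'.length).map (l.length + ·)) = 0 := by
    rw [List.countP_eq_zero]
    intro a ha
    simp only [List.mem_map] at ha
    obtain ⟨b, hb, rfl⟩ := ha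
    simp [List.take_length_add_append]; omega
  rw [h1, add_zero]
  apply List.countP_congr
  intro i hi
  rw [List.mem_range] at hi
  rw [List.take_append_of_le_length hi.le]

theorem vL_append_right {l l' : List ℕ} {k : ℕ} (h : 1 ≤ k) :
    vL (l ++ l') (k + l.sum) = vL l' k + l.length := by
  unfold vL
  rw [List.length_append, List.range_add, List.countP_append, List.countP_map]
  have h1 : List.countP (fun i => decide (((l ++ l').take i).sum < k + l.sum))
      (List.range l.length) = l.length := by
    conv_rhs => rw [← List.length_range (n := l.length)]
    rw [List.countP_eq_length]
    intro i hi
    rw [List.mem_range] at hi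
    rw [List.take_append_of_le_length hi.le]
    have := take_sum_le l i
    simp; omega
  rw [h1, add_comm]
  congr 1
  apply List.countP_congr
  intro i hi
  simp [List.take_length_add_append]; omega

theorem vL_le (l : List ℕ) (k : ℕ) : vL l k ≤ l.length := by
  unfold vL
  exact List.countP_le_length.trans (by simp)

theorem vL_single {x k : ℕ} (h : 1 ≤ k) : vL [x] k = 1 := by
  have : 0 < k := h
  simp [vL, List.range_succ, this]

theorem vL_zero (l : List ℕ) : vL l 0 = 0 := by simp [vL]

theorem vL_pos {l : List ℕ} {k : ℕ} (h : 1 ≤ k) (h2 : l ≠ []) : 1 ≤ vL l k := by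
  cases l with
  | nil => simp at h2
  | cons x l =>
    by_cases hk : k ≤ x
    · have := vL_append_left (l := [x]) (l' := l) (k := k) (by simpa using hk)
      rw [vL_single h] at this; simpa using this.ge
    · have := vL_append_right (l := [x]) (l' := l) (k := k - x) (by omega)
      simp only [List.sum_singleton, List.length_singleton, List.cons_append, List.nil_append] at this
      rw [Nat.sub_add_cancel (by omega)] at this; omega

theorem vL_pos' {l : List ℕ} {k : ℕ} (h : k ∈ Finset.Icc 1 l.sum) : 1 ≤ vL l k := by
  simp only [Finset.mem_Icc] at h
  apply vL_pos h.1; rintro rfl; simp at h; omega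

theorem vL_mem {l : List ℕ} {k : ℕ} (h : k ∈ Finset.Icc 1 l.sum) :
    vL l k ∈ Finset.Icc 1 l.length := Finset.mem_Icc.2 ⟨vL_pos' h, vL_le l k⟩

theorem vL_mono {l : List ℕ} {a b : ℕ} (h : a ≤ b) : vL l a ≤ vL l b := by
  apply List.countP_mono_left
  intro x _; simp; omega

theorem mem_HL {l : List ℕ} {I : Finset ℕ} {k : ℕ} :
    k ∈ HL l I ↔ (1 ≤ k ∧ k ≤ l.sum) ∧ vL l k ∈ I := by simp [HL]

theorem HL_append {l l' : List ℕ} {I I1 I2 : Finset ℕ}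
    (h1 : ∀ i, 1 ≤ i → i ≤ l.length → (i ∈ I1 ↔ i ∈ I))
    (h2 : ∀ i, 1 ≤ i → (i ∈ I2 ↔ i + l.length ∈ I)) :
    HL (l ++ l') I = HL l I1 ∪ (HL l' I2).image (· + l.sum) := by
  ext k
  simp only [mem_HL, Finset.mem_union, Finset.mem_image, List.sum_append]
  constructor
  · rintro ⟨⟨h3, h4⟩, h5⟩
    by_cases hk : k ≤ l.sum
    · left
      rw [vL_append_left hk] at h5
      exact ⟨⟨h3, hk⟩, (h1 _ (vL_pos' (Finset.mem_Icc.2 ⟨h3, hk⟩)) (vL_le _ _)).2 h5⟩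
    · right
      have hk' : k = (k - l.sum) + l.sum := by omega
      rw [hk', vL_append_right (by omega)] at h5
      have hI : k - l.sum ∈ Finset.Icc 1 l'.sum := Finset.mem_Icc.2 (by omega)
      exact ⟨k - l.sum, ⟨by omega, (h2 _ (vL_pos' hI)).2 h5⟩, by omega⟩
  · rintro (⟨⟨h3, h4⟩, h5⟩ | ⟨j, ⟨⟨h3, h4⟩, h5⟩, rfl⟩)
    · rw [vL_append_left h4]
      exact ⟨by omega, (h1 _ (vL_pos' (Finset.mem_Icc.2 ⟨h3, h4⟩)) (vL_le _ _)).1 h5⟩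
    · rw [vL_append_right h3]
      exact ⟨by omega, (h2 _ (vL_pos' (Finset.mem_Icc.2 ⟨h3, h4⟩))).1 h5⟩

theorem rank_union_left {s t : Finset ℕ} {m k : ℕ} (hk : k ≤ m) (ht : ∀ x ∈ t, 1 ≤ x) :
    rank (s ∪ t.image (· + m)) k = rank s k := by
  unfold rank
  congr 1
  ext x
  simp only [Finset.mem_filter, Finset.mem_union, Finset.mem_image]
  constructor
  · rintro ⟨h | ⟨y, hy, rfl⟩, h2⟩
    · exact ⟨h, h2⟩
    · have := ht y hy; omega
  · rintro ⟨h, h2⟩; exact ⟨Or.inl h, h2⟩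

theorem rank_union_right {s t : Finset ℕ} {m k : ℕ} (hs : ∀ x ∈ s, x ≤ m) (ht : ∀ x ∈ t, 1 ≤ x) :
    rank (s ∪ t.image (· + m)) (k + m) = s.card + rank t k := by
  unfold rank
  rw [Finset.filter_union, Finset.card_union_of_disjoint]
  · congr 1
    · congr 1; ext x; simp only [Finset.mem_filter]
      exact ⟨fun h => h.1, fun h => ⟨h, by have := hs x h; omega⟩⟩
    · rw [Finset.filter_image, Finset.card_image_of_injective _ (add_left_injective m)]
      congr 1; ext x; simp
  · rw [Finset.disjoint_left]
    intro x; simp only [Finset.mem_filter, Finset.mem_image]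
    rintro ⟨h1, h2⟩ ⟨⟨y, hy, rfl⟩, h3⟩
    have := ht y hy; have := hs _ h1; omega

theorem HL_bd {l : List ℕ} {I : Finset ℕ} : ∀ x ∈ HL l I, x ≤ l.sum := fun x hx => (mem_HL.1 hx).1.2
theorem HL_one {l : List ℕ} {I : Finset ℕ} : ∀ x ∈ HL l I, 1 ≤ x := fun x hx => (mem_HL.1 hx).1.1

theorem phi_append_left {l l' : List ℕ} {I I1 I2 : Finset ℕ}
    (h1 : ∀ i, 1 ≤ i → i ≤ l.length → (i ∈ I1 ↔ i ∈ I))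
    (h2 : ∀ i, 1 ≤ i → (i ∈ I2 ↔ i + l.length ∈ I)) {k : ℕ} (hk : k ≤ l.sum) :
    rank (HL (l ++ l') I) k = rank (HL l I1) k := by
  rw [HL_append h1 h2, rank_union_left hk HL_one]

theorem phi_append_right {l l' : List ℕ} {I I1 I2 : Finset ℕ}
    (h1 : ∀ i, 1 ≤ i → i ≤ l.length → (i ∈ I1 ↔ i ∈ I))
    (h2 : ∀ i, 1 ≤ i → (i ∈ I2 ↔ i + l.length ∈ I)) {k : ℕ} :
    rank (HL (l ++ l') I) (k + l.sum) = (HL l I1).card + rank (HL l' I2) k := by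
  rw [HL_append h1 h2, rank_union_right HL_bd HL_one]

theorem sL_append {l l' : List ℕ} {I I1 I2 : Finset ℕ}
    (h1 : ∀ i, 1 ≤ i → i ≤ l.length → (i ∈ I1 ↔ i ∈ I))
    (h2 : ∀ i, 1 ≤ i → (i ∈ I2 ↔ i + l.length ∈ I)) :
    sL (l ++ l') I = sL l I1 ++ sL l' I2 := by
  unfold sL
  rw [List.length_append, List.range_add, List.filter_append, List.map_append, List.filter_map,
    List.map_map]
  congr 1
  · have : (List.range l.length).filter (fun i => decide (i + 1 ∈ I)) =
        (List.range l.length).filter (fun i => decide (i + 1 ∈ I1)) := by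
      apply List.filter_congr
      intro i hi; rw [List.mem_range] at hi
      rw [decide_eq_decide]; exact (h1 _ (by omega) (by omega)).symm
    rw [this]
    apply List.map_congr_left
    intro i hi
    simp only [List.mem_filter, List.mem_range] at hi
    rw [List.getD_append _ _ _ _ hi.1]
  · have : (List.range l'.length).filter ((fun i => decide (i + 1 ∈ I)) ∘ (l.length + ·)) =
        (List.range l'.length).filter (fun i => decide (i + 1 ∈ I2)) := by
      apply List.filter_congr
      intro i hi
      simp only [Function.comp]
      rw [decide_eq_decide, h2 _ (by omega)]
      rw [show l.length + i + 1 = i + 1 + l.length by omega]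
    rw [this]
    apply List.map_congr_left
    intro i hi
    simp only [Function.comp]
    rw [List.getD_append_right _ _ _ _ (by omega)]
    congr 1; omega

theorem HL_congr {l : List ℕ} {I I' : Finset ℕ} (h : ∀ i, 1 ≤ i → i ≤ l.length → (i ∈ I ↔ i ∈ I')) :
    HL l I = HL l I' := by
  ext k; simp only [mem_HL]
  apply and_congr_right
  rintro ⟨h1, h2⟩
  exact h _ (vL_pos' (Finset.mem_Icc.2 ⟨h1, h2⟩)) (vL_le _ _)

theorem sL_congr {l : List ℕ} {I I' : Finset ℕ} (h : ∀ i, 1 ≤ i → i ≤ l.length → (i ∈ I ↔ i ∈ I')) :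
    sL l I = sL l I' := by
  unfold sL
  congr 1
  apply List.filter_congr
  intro i hi; rw [List.mem_range] at hi
  rw [decide_eq_decide]; exact h _ (by omega) (by omega)

def shift (I : Finset ℕ) (n : ℕ) : Finset ℕ := (I.filter (n < ·)).image (· - n)

theorem mem_shift {I : Finset ℕ} {n i : ℕ} : i ∈ shift I n ↔ 1 ≤ i ∧ i + n ∈ I := by
  simp only [shift, Finset.mem_image, Finset.mem_filter]
  constructor
  · rintro ⟨a, ⟨h1, h2⟩, rfl⟩
    exact ⟨by omega, by rwa [Nat.sub_add_cancel h2.le]⟩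
  · rintro ⟨h1, h2⟩; exact ⟨i + n, ⟨h2, by omega⟩, by omega⟩

theorem shift_spec (I : Finset ℕ) (n : ℕ) : ∀ i, 1 ≤ i → (i ∈ shift I n ↔ i + n ∈ I) := by
  intro i hi; simp [mem_shift, hi]

theorem HL_cons (x : ℕ) (l : List ℕ) (I : Finset ℕ) :
    HL (x :: l) I = HL [x] I ∪ (HL l (shift I 1)).image (· + x) := by
  have := HL_append (l := [x]) (l' := l) (I := I) (I1 := I) (fun _ _ _ => Iff.rfl) (shift_spec I 1)
  simpa using this

theorem sL_cons (x : ℕ) (l : List ℕ) (I : Finset ℕ) :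
    sL (x :: l) I = sL [x] I ++ sL l (shift I 1) :=
  sL_append (l := [x]) (l' := l) (I := I) (I1 := I) (fun _ _ _ => Iff.rfl) (shift_spec I 1)

theorem sL_nil (I : Finset ℕ) : sL [] I = [] := rfl

theorem sL_single (x : ℕ) (I : Finset ℕ) : sL [x] I = if 1 ∈ I then [x] else [] := by
  by_cases h : 1 ∈ I <;> simp [sL, h]

theorem HL_single (x : ℕ) (I : Finset ℕ) : HL [x] I = if 1 ∈ I then Finset.Icc 1 x else ∅ := by
  ext k
  rw [mem_HL]
  split_ifs with h
  · simp only [Finset.mem_Icc, List.sum_singleton]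
    constructor
    · exact fun h => h.1
    · intro h1; rw [vL_single h1.1]; exact ⟨h1, h⟩
  · simp only [Finset.notMem_empty, iff_false]
    rintro ⟨h1, h2⟩; rw [vL_single h1.1] at h2; exact h h2

theorem sL_sum (l : List ℕ) (I : Finset ℕ) : (sL l I).sum = (HL l I).card := by
  induction l generalizing I with
  | nil => simp [sL, HL]
  | cons x l ih =>
    rw [sL_cons, HL_cons, List.sum_append, Finset.card_union_of_disjoint,
      Finset.card_image_of_injective _ (add_left_injective x), ih, sL_single, HL_single]
    · split_ifs <;> simp
    · rw [Finset.disjoint_left]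
      intro a ha hb
      rw [Finset.mem_image] at hb
      obtain ⟨b, hb, rfl⟩ := hb
      have := HL_bd _ ha; have := HL_one _ hb; simp at *; omega

theorem shift_rank {I : Finset ℕ} (h0 : 0 ∉ I) (i n : ℕ) :
    rank I (i + n) = rank (I.filter (· ≤ n)) n + rank (shift I n) i := by
  have h : I = I.filter (· ≤ n) ∪ (shift I n).image (· + n) := by
    ext x; simp only [Finset.mem_union, Finset.mem_filter, Finset.mem_image, mem_shift]
    constructor
    · intro hx
      by_cases h : x ≤ n
      · exact Or.inl ⟨hx, h⟩
      · exact Or.inr ⟨x - n, ⟨by omega, by rwa [Nat.sub_add_cancel (by omega)]⟩, by omega⟩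
    · rintro (h | ⟨y, h, rfl⟩)
      · exact h.1
      · exact h.2
  conv_lhs => rw [h]
  rw [rank_union_right]
  · congr 1; unfold rank; rw [Finset.filter_filter]; simp
  · intro x hx; simp at hx; exact hx.2
  · intro x hx; exact (mem_shift.1 hx).1

theorem rank_one {I : Finset ℕ} (h0 : 0 ∉ I) : rank I 1 = if 1 ∈ I then 1 else 0 := by
  unfold rank
  have : I.filter (· ≤ 1) = if 1 ∈ I then {1} else ∅ := by
    ext x; split_ifs with h <;> simp
    · constructor
      · rintro ⟨h1, h2⟩; rcases Nat.eq_zero_or_pos x with rfl | h3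
        · contradiction
        · omega
      · rintro rfl; simp [h]
    · intro h1; by_contra h2
      have : x = 0 ∨ x = 1 := by omega
      rcases this with rfl | rfl <;> contradiction
  rw [this]; split_ifs <;> simp

theorem shift_rank_one {I : Finset ℕ} (h0 : 0 ∉ I) (i : ℕ) :
    rank I (i + 1) = (if 1 ∈ I then 1 else 0) + rank (shift I 1) i := by
  rw [shift_rank h0, ← rank_one h0]; congr 1; unfold rank; simp [Finset.filter_filter]

theorem zero_notMem_shift (I : Finset ℕ) (n : ℕ) : 0 ∉ shift I n := by simp [mem_shift]

theorem sL_length_single (x : ℕ) (I : Finset ℕ) : (sL [x] I).length = if 1 ∈ I then 1 else 0 := by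
  rw [sL_single]; split_ifs <;> simp

theorem vL_sL {l : List ℕ} {I : Finset ℕ} (h0 : 0 ∉ I) {k : ℕ} (hk : k ∈ HL l I) :
    vL (sL l I) (rank (HL l I) k) = rank I (vL l k) := by
  induction l generalizing I k with
  | nil => simp [HL] at hk
  | cons x l ih =>
    have hk2 := hk
    rw [HL_cons, Finset.mem_union, Finset.mem_image] at hk
    have e1 := @phi_append_left [x] l I I (shift I 1) (fun _ _ _ => Iff.rfl) (shift_spec I 1) k
    rcases hk with hk | ⟨k, hk, rfl⟩
    · have hkx : k ≤ [x].sum := HL_bd _ hk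
      have hk1 : 1 ≤ k := HL_one _ hk
      specialize e1 hkx
      simp only [List.cons_append, List.nil_append] at e1
      have : vL (x :: l) k = 1 := by
        have := vL_append_left (l := [x]) (l' := l) hkx
        rw [vL_single hk1] at this; exact this
      rw [e1, sL_cons, vL_append_left, this, rank_one h0]
      · have h1 : 1 ∈ I := by
          rw [mem_HL, vL_single hk1] at hk; exact hk.2
        rw [HL_single, sL_single, if_pos h1, if_pos h1, if_pos h1, vL_single]
        apply rank_pos; simp at hkx; simp; omega
      · rw [sL_sum]; exact rank_le_card _ _
    · have e2 := @phi_append_right [x] l I I (shift I 1) (fun _ _ _ => Iff.rfl) (shift_spec I 1) k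
      have e3 := @vL_append_right [x] l k (HL_one _ hk)
      simp only [List.cons_append, List.nil_append, List.sum_singleton, List.length_singleton] at e2 e3
      rw [e2, e3, sL_cons, ← sL_sum, add_comm, vL_append_right (rank_pos hk), ih (zero_notMem_shift _ _) hk,
        shift_rank_one h0, sL_length_single, add_comm]

theorem sL_sL {l : List ℕ} {I J : Finset ℕ} (h0 : 0 ∉ I) :
    sL (sL l I) J = sL l (I.filter (fun i => rank I i ∈ J)) := by
  induction l generalizing I J with
  | nil => rfl
  | cons x l ih =>
    rw [sL_cons, sL_append (I1 := J) (fun _ _ _ => Iff.rfl) (shift_spec J _),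
      ih (zero_notMem_shift _ _), sL_cons x l]
    congr 1
    · rw [sL_single, sL_single]
      by_cases h : 1 ∈ I
      · simp [h, sL_single, rank_one h0]
      · simp [h, sL_nil]
    · apply sL_congr
      intro i h1 h2
      simp only [Finset.mem_filter, mem_shift, h1, true_and, shift_rank_one h0, sL_length_single]
      constructor
      · rintro ⟨h3, h4, h5⟩; exact ⟨h3, by rwa [add_comm]⟩
      · rintro ⟨h3, h5⟩; exact ⟨h3, rank_pos (by simp [mem_shift, h1, h3]), by rwa [add_comm]⟩

theorem sL_length (l : List ℕ) {I : Finset ℕ} (h : I ⊆ Finset.Icc 1 l.length) :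
    (sL l I).length = I.card := by
  unfold sL
  rw [List.length_map, ← List.toFinset_card_of_nodup (List.nodup_range.filter _)]
  rw [← Finset.card_image_of_injective _ (add_left_injective 1)]
  congr 1
  ext x
  simp only [Finset.mem_image, List.mem_toFinset, List.mem_filter, List.mem_range]
  constructor
  · rintro ⟨a, ⟨h1, h2⟩, rfl⟩; simpa using h2
  · intro hx; have := h hx; simp only [Finset.mem_Icc] at this
    refine ⟨x - 1, ⟨by omega, ?_⟩, by omega⟩
    rw [Nat.sub_add_cancel this.1]; simpa using hx

theorem sL_pos {l : List ℕ} {I : Finset ℕ} (h : ∀ x ∈ l, 0 < x) : ∀ x ∈ sL l I, 0 < x := by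
  intro x hx
  simp only [sL, List.mem_map, List.mem_filter, List.mem_range] at hx
  obtain ⟨i, ⟨h1, _⟩, rfl⟩ := hx
  rw [List.getD_eq_getElem _ _ h1]
  exact h _ (List.getElem_mem _)

theorem HL_full (l : List ℕ) : HL l (Finset.Icc 1 l.length) = Finset.Icc 1 l.sum := by
  apply Finset.filter_true_of_mem
  intro k hk; exact vL_mem hk

theorem sL_full (l : List ℕ) : sL l (Finset.Icc 1 l.length) = l := by
  unfold sL
  rw [List.filter_eq_self.2]
  · apply List.ext_getElem
    · simp
    · intro i h1 h2; simp [h2]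
  · intro i hi; rw [List.mem_range] at hi; simp; omega

end BDH


namespace BDH
open BD

theorem v_eq (G : BD) (k : ℕ) : G.v k = vL G.lam k := rfl
theorem HI_eq (G : BD) (I : Finset ℕ) : G.HI I = HL G.lam I := rfl
theorem phi_eq (G : BD) (I : Finset ℕ) (k : ℕ) : G.phi I k = rank (HL G.lam I) k := rfl
theorem sub_lam (G : BD) (I : Finset ℕ) : (G.sub I).lam = sL G.lam I := rfl

theorem bd_ext {A B : BD} (h1 : A.lam = B.lam) (h2 : A.up = B.up) (h3 : A.dn = B.dn)
    (h4 : A.ed = B.ed) : A = B := by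
  cases A; cases B; simp_all

theorem mem_HI {G : BD} {I : Finset ℕ} {k : ℕ} :
    k ∈ G.HI I ↔ (1 ≤ k ∧ k ≤ G.omega) ∧ G.v k ∈ I := mem_HL

theorem phi_inj {G : BD} {I : Finset ℕ} {a b : ℕ} (ha : a ∈ G.HI I) (hb : b ∈ G.HI I) :
    G.phi I a = G.phi I b ↔ a = b := rank_inj ha hb

theorem phi_pos {G : BD} {I : Finset ℕ} {a : ℕ} (ha : a ∈ G.HI I) : 1 ≤ G.phi I a := rank_pos ha

theorem sub_omega (G : BD) (I : Finset ℕ) : (G.sub I).omega = (G.HI I).card := sL_sum _ _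

theorem phi_le {G : BD} {I : Finset ℕ} (a : ℕ) : G.phi I a ≤ (G.sub I).omega := by
  rw [sub_omega]; exact rank_le_card _ _

theorem sub_v {G : BD} {I : Finset ℕ} (h0 : 0 ∉ I) {k : ℕ} (hk : k ∈ G.HI I) :
    (G.sub I).v (G.phi I k) = rank I (G.v k) := vL_sL h0 hk

theorem sub_nv {G : BD} {I : Finset ℕ} (h : I ⊆ Finset.Icc 1 G.nv) : (G.sub I).nv = I.card :=
  sL_length _ h

theorem Valid.up_bd {G : BD} (h : G.Valid) {k : ℕ} (hk : k ∈ G.up) : 1 ≤ k ∧ k ≤ G.omega :=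
  Finset.mem_Icc.1 (h.2.1 hk)
theorem Valid.dn_bd {G : BD} (h : G.Valid) {k : ℕ} (hk : k ∈ G.dn) : 1 ≤ k ∧ k ≤ G.omega :=
  Finset.mem_Icc.1 (h.2.2.1 hk)
theorem Valid.ed_up {G : BD} (h : G.Valid) {p : ℕ × ℕ} (hk : p ∈ G.ed) : p.1 ∈ G.up :=
  (h.2.2.2.1 p hk).1
theorem Valid.ed_dn {G : BD} (h : G.Valid) {p : ℕ × ℕ} (hk : p ∈ G.ed) : p.2 ∈ G.dn :=
  (h.2.2.2.1 p hk).2.1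
theorem Valid.ed_v {G : BD} (h : G.Valid) {p : ℕ × ℕ} (hk : p ∈ G.ed) : G.v p.1 < G.v p.2 :=
  (h.2.2.2.1 p hk).2.2

theorem ed1_HI {G : BD} (h : G.Valid) {I : Finset ℕ} {p : ℕ × ℕ} (hp : p ∈ G.ed) (hI : G.v p.1 ∈ I) :
    p.1 ∈ G.HI I := mem_HI.2 ⟨Valid.up_bd h (Valid.ed_up h hp), hI⟩
theorem ed2_HI {G : BD} (h : G.Valid) {I : Finset ℕ} {p : ℕ × ℕ} (hp : p ∈ G.ed) (hI : G.v p.2 ∈ I) :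
    p.2 ∈ G.HI I := mem_HI.2 ⟨Valid.dn_bd h (Valid.ed_dn h hp), hI⟩

theorem zero_notMem {n : ℕ} {I : Finset ℕ} (h : I ⊆ Finset.Icc 1 n) : 0 ∉ I := by
  intro h1; have := h h1; simp at this

theorem mem_sub_up {G : BD} {I : Finset ℕ} {x : ℕ} :
    x ∈ (G.sub I).up ↔ ∃ a, a ∈ G.up ∧ a ∈ G.HI I ∧ G.phi I a = x := by
  simp [BD.sub, and_assoc]
theorem mem_sub_dn {G : BD} {I : Finset ℕ} {x : ℕ} :
    x ∈ (G.sub I).dn ↔ ∃ a, a ∈ G.dn ∧ a ∈ G.HI I ∧ G.phi I a = x := by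
  simp [BD.sub, and_assoc]
theorem mem_sub_ed {G : BD} (h : G.Valid) {I : Finset ℕ} {x : ℕ × ℕ} :
    x ∈ (G.sub I).ed ↔ ∃ p, p ∈ G.ed ∧ p.1 ∈ G.HI I ∧ p.2 ∈ G.HI I ∧
      x = (G.phi I p.1, G.phi I p.2) := by
  simp only [BD.sub, Finset.mem_image, Finset.mem_filter]
  constructor
  · rintro ⟨p, ⟨h1, h2, h3⟩, rfl⟩
    exact ⟨p, h1, ed1_HI h h1 h2, ed2_HI h h1 h3, rfl⟩
  · rintro ⟨p, h1, h2, h3, rfl⟩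
    exact ⟨p, ⟨h1, (mem_HI.1 h2).2, (mem_HI.1 h3).2⟩, rfl⟩

theorem sub_valid {G : BD} (h : G.Valid) {I : Finset ℕ} (h0 : 0 ∉ I) : (G.sub I).Valid := by
  refine ⟨sL_pos h.1, ?_, ?_, ?_, ?_, ?_⟩
  · intro x hx
    obtain ⟨a, ha, hb, rfl⟩ := mem_sub_up.1 hx
    exact Finset.mem_Icc.2 ⟨phi_pos hb, phi_le a⟩
  · intro x hx
    obtain ⟨a, ha, hb, rfl⟩ := mem_sub_dn.1 hx
    exact Finset.mem_Icc.2 ⟨phi_pos hb, phi_le a⟩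
  · intro x hx
    obtain ⟨p, hp, h1, h2, rfl⟩ := (mem_sub_ed h).1 hx
    refine ⟨mem_sub_up.2 ⟨_, Valid.ed_up h hp, h1, rfl⟩, mem_sub_dn.2 ⟨_, Valid.ed_dn h hp, h2, rfl⟩, ?_⟩
    simp only
    rw [sub_v h0 h1, sub_v h0 h2]
    exact rank_lt (mem_HI.1 h2).2 (Valid.ed_v h hp)
  · intro x hx y hy hxy
    obtain ⟨p, hp, h1, h2, rfl⟩ := (mem_sub_ed h).1 hx
    obtain ⟨q, hq, h3, h4, rfl⟩ := (mem_sub_ed h).1 hy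
    rw [h.2.2.2.2.1 p hp q hq ((phi_inj h1 h3).1 hxy)]
  · intro x hx y hy hxy
    obtain ⟨p, hp, h1, h2, rfl⟩ := (mem_sub_ed h).1 hx
    obtain ⟨q, hq, h3, h4, rfl⟩ := (mem_sub_ed h).1 hy
    rw [h.2.2.2.2.2 p hp q hq ((phi_inj h2 h4).1 hxy)]

theorem HI_sub {G : BD} {I J : Finset ℕ} (h0 : 0 ∉ I) :
    (G.sub I).HI J = (G.HI (I.filter (fun i => rank I i ∈ J))).image (G.phi I) := by
  ext x
  rw [mem_HI, Finset.mem_image]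
  constructor
  · rintro ⟨h1, h2⟩
    have : x ∈ (G.HI I).image (rank (G.HI I)) := by
      rw [rank_image, Finset.mem_Icc, ← sub_omega]; exact h1
    obtain ⟨a, ha, rfl⟩ := Finset.mem_image.1 this
    refine ⟨a, ?_, rfl⟩
    have h3 := sub_v h0 ha
    rw [phi_eq, ← HI_eq] at h3
    rw [h3] at h2
    rw [mem_HI] at ha ⊢
    exact ⟨ha.1, Finset.mem_filter.2 ⟨ha.2, h2⟩⟩
  · rintro ⟨a, ha, rfl⟩
    rw [mem_HI, Finset.mem_filter] at ha
    have ha' : a ∈ G.HI I := mem_HI.2 ⟨ha.1, ha.2.1⟩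
    rw [sub_v h0 ha']
    exact ⟨⟨phi_pos ha', phi_le a⟩, ha.2.2⟩

theorem HI_mono {G : BD} {I J : Finset ℕ} (h : I ⊆ J) : G.HI I ⊆ G.HI J := by
  intro x; simp only [mem_HI]; exact fun h1 => ⟨h1.1, h h1.2⟩

theorem phi_phi {G : BD} {I J : Finset ℕ} (h0 : 0 ∉ I) (k : ℕ) :
    (G.sub I).phi J (G.phi I k) = G.phi (I.filter (fun i => rank I i ∈ J)) k := by
  have := HI_sub (G := G) (J := J) h0
  rw [phi_eq, ← HI_eq, this]
  exact rank_rank (HI_mono (Finset.filter_subset _ _))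

theorem mem_HI_sub {G : BD} {I J : Finset ℕ} (h0 : 0 ∉ I) {a : ℕ} (ha : a ∈ G.HI I) :
    G.phi I a ∈ (G.sub I).HI J ↔ a ∈ G.HI (I.filter (fun i => rank I i ∈ J)) := by
  rw [HI_sub h0, Finset.mem_image]
  constructor
  · rintro ⟨b, hb, h⟩
    rwa [← (phi_inj (HI_mono (Finset.filter_subset _ _) hb) ha).1 h]
  · intro h; exact ⟨a, h, rfl⟩

theorem sub_sub {G : BD} (h : G.Valid) {I J : Finset ℕ} (h0 : 0 ∉ I) :
    (G.sub I).sub J = G.sub (I.filter (fun i => rank I i ∈ J)) := by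
  have hm : G.HI (I.filter (fun i => rank I i ∈ J)) ⊆ G.HI I := HI_mono (Finset.filter_subset _ _)
  refine bd_ext (sL_sL h0) ?_ ?_ ?_
  · ext x; simp only [mem_sub_up]
    constructor
    · rintro ⟨_, ⟨a, h1, h2, rfl⟩, h3, rfl⟩
      exact ⟨a, h1, (mem_HI_sub h0 h2).1 h3, (phi_phi h0 a).symm⟩
    · rintro ⟨a, h1, h2, rfl⟩
      exact ⟨_, ⟨a, h1, hm h2, rfl⟩, (mem_HI_sub h0 (hm h2)).2 h2, phi_phi h0 a⟩
  · ext x; simp only [mem_sub_dn]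
    constructor
    · rintro ⟨_, ⟨a, h1, h2, rfl⟩, h3, rfl⟩
      exact ⟨a, h1, (mem_HI_sub h0 h2).1 h3, (phi_phi h0 a).symm⟩
    · rintro ⟨a, h1, h2, rfl⟩
      exact ⟨_, ⟨a, h1, hm h2, rfl⟩, (mem_HI_sub h0 (hm h2)).2 h2, phi_phi h0 a⟩
  · ext x; simp only [mem_sub_ed h, mem_sub_ed (sub_valid h h0)]
    constructor
    · rintro ⟨_, ⟨a, h1, h2, h2', rfl⟩, h3, h4, rfl⟩
      refine ⟨a, h1, (mem_HI_sub h0 h2).1 h3, (mem_HI_sub h0 h2').1 h4, ?_⟩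
      rw [phi_phi h0, phi_phi h0]
    · rintro ⟨a, h1, h2, h2', rfl⟩
      refine ⟨_, ⟨a, h1, hm h2, hm h2', rfl⟩, (mem_HI_sub h0 (hm h2)).2 h2, (mem_HI_sub h0 (hm h2')).2 h2', ?_⟩
      rw [phi_phi h0, phi_phi h0]

theorem sub_full {G : BD} (h : G.Valid) : G.sub (Finset.Icc 1 G.nv) = G := by
  have hH : G.HI (Finset.Icc 1 G.nv) = Finset.Icc 1 G.omega := HL_full _
  have hp : ∀ k, k ≤ G.omega → G.phi (Finset.Icc 1 G.nv) k = k := by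
    intro k hk; rw [phi_eq, ← HI_eq, hH, rank_Icc hk]
  refine bd_ext (sL_full _) ?_ ?_ ?_
  · ext x; rw [mem_sub_up]; constructor
    · rintro ⟨a, h1, h2, rfl⟩; rwa [hp a (Valid.up_bd h h1).2]
    · intro hx; exact ⟨x, hx, by rw [hH]; exact h.2.1 hx, hp x (Valid.up_bd h hx).2⟩
  · ext x; rw [mem_sub_dn]; constructor
    · rintro ⟨a, h1, h2, rfl⟩; rwa [hp a (Valid.dn_bd h h1).2]
    · intro hx; exact ⟨x, hx, by rw [hH]; exact h.2.2.1 hx, hp x (Valid.dn_bd h hx).2⟩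
  · ext x; rw [mem_sub_ed h]; constructor
    · rintro ⟨a, h1, h2, h3, rfl⟩
      rwa [hp _ (Valid.up_bd h (Valid.ed_up h h1)).2, hp _ (Valid.dn_bd h (Valid.ed_dn h h1)).2]
    · intro hx
      have a1 := Valid.ed_up h hx
      have a2 := Valid.ed_dn h hx
      refine ⟨x, hx, by rw [hH]; exact h.2.1 a1, by rw [hH]; exact h.2.2.1 a2, ?_⟩
      rw [hp _ (Valid.up_bd h a1).2, hp _ (Valid.dn_bd h a2).2]

theorem eq_eps {G : BD} (h : G.Valid) (hn : G.nv = 0) : G = eps := by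
  have hl : G.lam = [] := List.length_eq_zero_iff.1 hn
  have ho : G.omega = 0 := by simp [BD.omega, hl]
  have hu : G.up = ∅ := by
    rw [Finset.eq_empty_iff_forall_notMem]; intro x hx; have := Valid.up_bd h hx; omega
  have hd : G.dn = ∅ := by
    rw [Finset.eq_empty_iff_forall_notMem]; intro x hx; have := Valid.dn_bd h hx; omega
  refine bd_ext hl hu hd ?_
  show G.ed = ∅
  rw [Finset.eq_empty_iff_forall_notMem]; intro x hx
  have := Valid.ed_up h hx; rw [hu] at this; simp at this

theorem sub_empty {G : BD} (h : G.Valid) : G.sub ∅ = eps :=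
  eq_eps (sub_valid h (by simp)) (by rw [sub_nv (by simp)]; simp)

theorem sub_eq_eps {G : BD} (h : G.Valid) {I : Finset ℕ} (hI : I ⊆ Finset.Icc 1 G.nv) :
    G.sub I = eps ↔ I = ∅ := by
  constructor
  · intro h1
    have := sub_nv hI
    rw [h1] at this
    exact Finset.card_eq_zero.1 this.symm
  · rintro rfl; exact sub_empty h

-- isolated
theorem iso_sub {G : BD} (h : G.Valid) {I J : Finset ℕ} (h0 : 0 ∉ I) (hI : G.Isolated I) :
    (G.sub I).Isolated J ↔ G.Isolated (I.filter (fun i => rank I i ∈ J)) := by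
  constructor
  · intro h1 p hp
    simp only [Finset.mem_filter]
    by_cases hv : G.v p.1 ∈ I
    · have hv2 := (hI p hp).1 hv
      have a1 := ed1_HI h hp hv
      have a2 := ed2_HI h hp hv2
      have := h1 _ ((mem_sub_ed h).2 ⟨p, hp, a1, a2, rfl⟩)
      simp only [sub_v h0 a1, sub_v h0 a2] at this
      simp [hv, hv2, this]
    · have hv2 := mt (hI p hp).2 hv
      simp [hv, hv2]
  · intro h1 x hx
    obtain ⟨p, hp, a1, a2, rfl⟩ := (mem_sub_ed h).1 hx
    simp only [sub_v h0 a1, sub_v h0 a2]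
    have := h1 p hp
    simpa only [Finset.mem_filter, (mem_HI.1 a1).2, (mem_HI.1 a2).2, true_and] using this

theorem iso_compl {G : BD} (h : G.Valid) {I : Finset ℕ} (hI : G.Isolated I) :
    G.Isolated (Finset.Icc 1 G.nv \ I) := by
  intro p hp
  have h1 : G.v p.1 ∈ Finset.Icc 1 G.nv := vL_mem (h.2.1 (Valid.ed_up h hp))
  have h2 : G.v p.2 ∈ Finset.Icc 1 G.nv := vL_mem (h.2.2.1 (Valid.ed_dn h hp))
  simp [h1, h2, hI p hp]

theorem iso_sdiff {G : BD} {I J : Finset ℕ} (hI : G.Isolated I) (hJ : G.Isolated J) :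
    G.Isolated (I \ J) := by
  intro p hp; simp [hI p hp, hJ p hp]

theorem iso_union {G : BD} {I J : Finset ℕ} (hI : G.Isolated I) (hJ : G.Isolated J) :
    G.Isolated (I ∪ J) := by
  intro p hp; simp [hI p hp, hJ p hp]

theorem mem_HfUp {G : BD} {x : ℕ} : x ∈ G.HfUp ↔ x ∈ G.up ∧ ∀ p ∈ G.ed, p.1 ≠ x := by
  simp [BD.HfUp]; grind
theorem mem_HfDn {G : BD} {x : ℕ} : x ∈ G.HfDn ↔ x ∈ G.dn ∧ ∀ p ∈ G.ed, p.2 ≠ x := by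
  simp [BD.HfDn]; grind

theorem mem_HfUp_sub {G : BD} (h : G.Valid) {I : Finset ℕ} (hI : G.Isolated I) {x : ℕ} :
    x ∈ (G.sub I).HfUp ↔ ∃ a, a ∈ G.HfUp ∧ a ∈ G.HI I ∧ G.phi I a = x := by
  rw [mem_HfUp, mem_sub_up]
  constructor
  · rintro ⟨⟨a, h1, h2, rfl⟩, h3⟩
    refine ⟨a, mem_HfUp.2 ⟨h1, ?_⟩, h2, rfl⟩
    rintro p hp rfl
    have hv := (mem_HI.1 h2).2
    exact h3 _ ((mem_sub_ed h).2 ⟨p, hp, h2, ed2_HI h hp ((hI p hp).1 hv), rfl⟩) rfl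
  · rintro ⟨a, h1, h2, rfl⟩
    rw [mem_HfUp] at h1
    refine ⟨⟨a, h1.1, h2, rfl⟩, ?_⟩
    intro x hx
    obtain ⟨p, hp, a1, a2, rfl⟩ := (mem_sub_ed h).1 hx
    simp only [ne_eq, phi_inj a1 h2]
    exact h1.2 p hp

theorem mem_HfDn_sub {G : BD} (h : G.Valid) {I : Finset ℕ} (hI : G.Isolated I) {x : ℕ} :
    x ∈ (G.sub I).HfDn ↔ ∃ a, a ∈ G.HfDn ∧ a ∈ G.HI I ∧ G.phi I a = x := by
  rw [mem_HfDn, mem_sub_dn]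
  constructor
  · rintro ⟨⟨a, h1, h2, rfl⟩, h3⟩
    refine ⟨a, mem_HfDn.2 ⟨h1, ?_⟩, h2, rfl⟩
    rintro p hp rfl
    have hv := (mem_HI.1 h2).2
    exact h3 _ ((mem_sub_ed h).2 ⟨p, hp, ed1_HI h hp ((hI p hp).2 hv), h2, rfl⟩) rfl
  · rintro ⟨a, h1, h2, rfl⟩
    rw [mem_HfDn] at h1
    refine ⟨⟨a, h1.1, h2, rfl⟩, ?_⟩
    intro x hx
    obtain ⟨p, hp, a1, a2, rfl⟩ := (mem_sub_ed h).1 hx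
    simp only [ne_eq, phi_inj a2 h2]
    exact h1.2 p hp

-- composition
theorem comp_omega (A B : BD) (s) : (A.comp B s).omega = A.omega + B.omega := by
  simp [BD.omega, BD.comp]
theorem comp_nv (A B : BD) (s) : (A.comp B s).nv = A.nv + B.nv := by
  simp [BD.nv, BD.comp]
theorem comp_v_left {A B : BD} {s} {k : ℕ} (h : k ≤ A.omega) : (A.comp B s).v k = A.v k :=
  vL_append_left h
theorem comp_v_right {A B : BD} {s} {k : ℕ} (h : 1 ≤ k) :
    (A.comp B s).v (k + A.omega) = B.v k + A.nv := vL_append_right h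

theorem mem_comp_up {A B : BD} {s} {x : ℕ} :
    x ∈ (A.comp B s).up ↔ x ∈ A.up ∨ ∃ b ∈ B.up, b + A.omega = x := by
  simp [BD.comp]
theorem mem_comp_dn {A B : BD} {s} {x : ℕ} :
    x ∈ (A.comp B s).dn ↔ x ∈ A.dn ∨ ∃ b ∈ B.dn, b + A.omega = x := by
  simp [BD.comp]
theorem mem_comp_ed {A B : BD} {s} {x : ℕ × ℕ} :
    x ∈ (A.comp B s).ed ↔ x ∈ A.ed ∨ (∃ p ∈ s, (p.1, p.2 + A.omega) = x) ∨
      ∃ p ∈ B.ed, (p.1 + A.omega, p.2 + A.omega) = x := by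
  simp only [BD.comp, Finset.mem_union, Finset.mem_image, or_assoc]

theorem Up_bd {G : BD} (h : G.Valid) {k : ℕ} (hk : k ∈ G.HfUp) : 1 ≤ k ∧ k ≤ G.omega :=
  Valid.up_bd h (mem_HfUp.1 hk).1
theorem Dn_bd {G : BD} (h : G.Valid) {k : ℕ} (hk : k ∈ G.HfDn) : 1 ≤ k ∧ k ≤ G.omega :=
  Valid.dn_bd h (mem_HfDn.1 hk).1

theorem v_le (G : BD) (k : ℕ) : G.v k ≤ G.nv := vL_le _ _
theorem v_pos {G : BD} {k : ℕ} (h : 1 ≤ k ∧ k ≤ G.omega) : 1 ≤ G.v k := vL_pos' (Finset.mem_Icc.2 h)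

theorem comp_valid {A B : BD} (hA : A.Valid) (hB : B.Valid) {s} (hs : Matching A B s) :
    (A.comp B s).Valid := by
  refine ⟨?_, ?_, ?_, ?_, ?_, ?_⟩
  · intro x hx
    simp only [BD.comp, List.mem_append] at hx
    exact hx.elim (hA.1 x) (hB.1 x)
  · intro x hx
    rw [Finset.mem_Icc, comp_omega]
    rcases mem_comp_up.1 hx with h | ⟨b, h, rfl⟩
    · have := Valid.up_bd hA h; omega
    · have := Valid.up_bd hB h; omega
  · intro x hx
    rw [Finset.mem_Icc, comp_omega]
    rcases mem_comp_dn.1 hx with h | ⟨b, h, rfl⟩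
    · have := Valid.dn_bd hA h; omega
    · have := Valid.dn_bd hB h; omega
  · intro x hx
    rw [mem_comp_up, mem_comp_dn]
    rcases mem_comp_ed.1 hx with h | ⟨p, h, rfl⟩ | ⟨p, h, rfl⟩
    · refine ⟨Or.inl (Valid.ed_up hA h), Or.inl (Valid.ed_dn hA h), ?_⟩
      rw [comp_v_left (Valid.up_bd hA (Valid.ed_up hA h)).2,
        comp_v_left (Valid.dn_bd hA (Valid.ed_dn hA h)).2]
      exact Valid.ed_v hA h
    · have h1 := (hs.1 p h).1
      have h2 := (hs.1 p h).2
      refine ⟨Or.inl (mem_HfUp.1 h1).1, Or.inr ⟨_, (mem_HfDn.1 h2).1, rfl⟩, ?_⟩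
      simp only
      rw [comp_v_left (Up_bd hA h1).2, comp_v_right (Dn_bd hB h2).1]
      have := v_le A p.1
      have := v_pos (Dn_bd hB h2)
      omega
    · refine ⟨Or.inr ⟨_, Valid.ed_up hB h, rfl⟩, Or.inr ⟨_, Valid.ed_dn hB h, rfl⟩, ?_⟩
      simp only
      rw [comp_v_right (Valid.up_bd hB (Valid.ed_up hB h)).1,
        comp_v_right (Valid.dn_bd hB (Valid.ed_dn hB h)).1]
      have := Valid.ed_v hB h; omega
  · intro x hx y hy hxy
    rcases mem_comp_ed.1 hx with h | ⟨p, h, rfl⟩ | ⟨p, h, rfl⟩ <;>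
    rcases mem_comp_ed.1 hy with h' | ⟨q, h', rfl⟩ | ⟨q, h', rfl⟩ <;> try simp only at hxy
    · exact hA.2.2.2.2.1 _ h _ h' hxy
    · exact absurd hxy ((mem_HfUp.1 (hs.1 q h').1).2 _ h)
    · have := Valid.up_bd hA (Valid.ed_up hA h)
      have := Valid.up_bd hB (Valid.ed_up hB h'); omega
    · exact absurd hxy.symm ((mem_HfUp.1 (hs.1 p h).1).2 _ h')
    · rw [hs.2.1 _ h _ h' hxy]
    · have := Up_bd hA (hs.1 p h).1
      have := Valid.up_bd hB (Valid.ed_up hB h'); omega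
    · have := Valid.up_bd hA (Valid.ed_up hA h')
      have := Valid.up_bd hB (Valid.ed_up hB h); omega
    · have := Up_bd hA (hs.1 q h').1
      have := Valid.up_bd hB (Valid.ed_up hB h); omega
    · rw [hB.2.2.2.2.1 _ h _ h' (by omega)]
  · intro x hx y hy hxy
    rcases mem_comp_ed.1 hx with h | ⟨p, h, rfl⟩ | ⟨p, h, rfl⟩ <;>
    rcases mem_comp_ed.1 hy with h' | ⟨q, h', rfl⟩ | ⟨q, h', rfl⟩ <;> try simp only at hxy
    · exact hA.2.2.2.2.2 _ h _ h' hxy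
    · have := Valid.dn_bd hA (Valid.ed_dn hA h)
      have := Dn_bd hB (hs.1 q h').2; omega
    · have := Valid.dn_bd hA (Valid.ed_dn hA h)
      have := Valid.dn_bd hB (Valid.ed_dn hB h'); omega
    · have := Valid.dn_bd hA (Valid.ed_dn hA h')
      have := Dn_bd hB (hs.1 p h).2; omega
    · rw [hs.2.2 _ h _ h' (by omega)]
    · exact absurd (by omega) ((mem_HfDn.1 (hs.1 p h).2).2 _ h')
    · have := Valid.dn_bd hA (Valid.ed_dn hA h')
      have := Valid.dn_bd hB (Valid.ed_dn hB h); omega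
    · exact absurd (by omega) ((mem_HfDn.1 (hs.1 q h').2).2 _ h)
    · rw [hB.2.2.2.2.2 _ h _ h' (by omega)]

theorem mem_matchings {A B : BD} {s} : s ∈ matchings A B ↔ Matching A B s := by
  simp only [matchings, Finset.mem_filter, Finset.mem_powerset, and_iff_right_iff_imp]
  intro h p hp
  exact Finset.mem_product.2 (h.1 p hp)

end BDH


namespace BDH
open BD

theorem mem_HfUp_comp {A B : BD} (hA : A.Valid) (hB : B.Valid) {s} (hs : Matching A B s) {x : ℕ} :
    x ∈ (A.comp B s).HfUp ↔ (x ∈ A.HfUp ∧ ∀ p ∈ s, p.1 ≠ x) ∨ ∃ b ∈ B.HfUp, b + A.omega = x := by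
  rw [mem_HfUp, mem_comp_up]
  constructor
  · rintro ⟨h | ⟨b, h, rfl⟩, h2⟩
    · left
      refine ⟨mem_HfUp.2 ⟨h, fun p hp => h2 p (mem_comp_ed.2 (Or.inl hp))⟩, fun p hp => ?_⟩
      exact h2 (p.1, p.2 + A.omega) (mem_comp_ed.2 (Or.inr (Or.inl ⟨p, hp, rfl⟩)))
    · right
      refine ⟨b, mem_HfUp.2 ⟨h, fun p hp => ?_⟩, rfl⟩
      rintro rfl
      exact h2 _ (mem_comp_ed.2 (Or.inr (Or.inr ⟨p, hp, rfl⟩))) rfl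
  · rintro (⟨h1, h2⟩ | ⟨b, h1, rfl⟩)
    · have hx := Up_bd hA h1
      rw [mem_HfUp] at h1
      refine ⟨Or.inl h1.1, fun q hq => ?_⟩
      rcases mem_comp_ed.1 hq with h | ⟨p, h, rfl⟩ | ⟨p, h, rfl⟩
      · exact h1.2 _ h
      · exact h2 p h
      · have := Valid.up_bd hB (Valid.ed_up hB h); simp only; omega
    · have hx := Up_bd hB h1
      rw [mem_HfUp] at h1
      refine ⟨Or.inr ⟨b, h1.1, rfl⟩, fun q hq => ?_⟩
      rcases mem_comp_ed.1 hq with h | ⟨p, h, rfl⟩ | ⟨p, h, rfl⟩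
      · have := Valid.up_bd hA (Valid.ed_up hA h); omega
      · have := Up_bd hA (hs.1 p h).1; simp only; omega
      · have := h1.2 _ h; simp only; omega

theorem mem_HfDn_comp {A B : BD} (hA : A.Valid) (hB : B.Valid) {s} (hs : Matching A B s) {x : ℕ} :
    x ∈ (A.comp B s).HfDn ↔ x ∈ A.HfDn ∨ ∃ b, (b ∈ B.HfDn ∧ ∀ p ∈ s, p.2 ≠ b) ∧ b + A.omega = x := by
  rw [mem_HfDn, mem_comp_dn]
  constructor
  · rintro ⟨h | ⟨b, h, rfl⟩, h2⟩
    · left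
      exact mem_HfDn.2 ⟨h, fun p hp => h2 p (mem_comp_ed.2 (Or.inl hp))⟩
    · right
      refine ⟨b, ⟨mem_HfDn.2 ⟨h, fun p hp => ?_⟩, fun p hp => ?_⟩, rfl⟩
      · rintro rfl
        exact h2 _ (mem_comp_ed.2 (Or.inr (Or.inr ⟨p, hp, rfl⟩))) rfl
      · rintro rfl
        exact h2 _ (mem_comp_ed.2 (Or.inr (Or.inl ⟨p, hp, rfl⟩))) rfl
  · rintro (h1 | ⟨b, ⟨h1, h2⟩, rfl⟩)
    · have hx := Dn_bd hA h1
      rw [mem_HfDn] at h1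
      refine ⟨Or.inl h1.1, fun q hq => ?_⟩
      rcases mem_comp_ed.1 hq with h | ⟨p, h, rfl⟩ | ⟨p, h, rfl⟩
      · exact h1.2 _ h
      · have := Dn_bd hB (hs.1 p h).2; simp only; omega
      · have := Valid.dn_bd hB (Valid.ed_dn hB h); simp only; omega
    · have hx := Dn_bd hB h1
      rw [mem_HfDn] at h1
      refine ⟨Or.inr ⟨b, h1.1, rfl⟩, fun q hq => ?_⟩
      rcases mem_comp_ed.1 hq with h | ⟨p, h, rfl⟩ | ⟨p, h, rfl⟩
      · have := Valid.dn_bd hA (Valid.ed_dn hA h); omega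
      · have := h2 _ h; simp only; omega
      · have := h1.2 _ h; simp only; omega

/-- data of the reassociation -/
def asR1 (A : BD) (t : Finset (ℕ × ℕ)) : Finset (ℕ × ℕ) :=
  (t.filter (fun p => A.omega < p.1)).image (fun p => (p.1 - A.omega, p.2))
def asR2 (A B : BD) (s t : Finset (ℕ × ℕ)) : Finset (ℕ × ℕ) :=
  s ∪ (t.filter (fun p => p.1 ≤ A.omega)).image (fun p => (p.1, p.2 + B.omega))
def asL1 (B : BD) (t : Finset (ℕ × ℕ)) : Finset (ℕ × ℕ) := t.filter (fun p => p.2 ≤ B.omega)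
def asL2 (A B : BD) (s t : Finset (ℕ × ℕ)) : Finset (ℕ × ℕ) :=
  s.image (fun p => (p.1 + A.omega, p.2)) ∪
  (t.filter (fun p => B.omega < p.2)).image (fun p => (p.1, p.2 - B.omega))

theorem mem_asR1 {A : BD} {t} {a b : ℕ} : (a, b) ∈ asR1 A t ↔ 1 ≤ a ∧ (a + A.omega, b) ∈ t := by
  simp only [asR1, Finset.mem_image, Finset.mem_filter, Prod.exists, Prod.mk.injEq]
  constructor
  · rintro ⟨c, d, ⟨h1, h2⟩, rfl, rfl⟩
    exact ⟨by omega, by rwa [Nat.sub_add_cancel h2.le]⟩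
  · rintro ⟨h1, h2⟩; exact ⟨_, _, ⟨h2, by omega⟩, by omega, rfl⟩

theorem mem_asR2 {A B : BD} {s t} {a b : ℕ} : (a, b) ∈ asR2 A B s t ↔
    (a, b) ∈ s ∨ ∃ c, (a, c) ∈ t ∧ a ≤ A.omega ∧ b = c + B.omega := by
  simp only [asR2, Finset.mem_union, Finset.mem_image, Finset.mem_filter, Prod.exists, Prod.mk.injEq]
  apply or_congr Iff.rfl
  constructor
  · rintro ⟨c, d, ⟨h1, h2⟩, rfl, rfl⟩; exact ⟨d, h1, h2, rfl⟩
  · rintro ⟨c, h1, h2, rfl⟩; exact ⟨_, _, ⟨h1, h2⟩, rfl, rfl⟩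

theorem mem_asL1 {B : BD} {t} {a b : ℕ} : (a, b) ∈ asL1 B t ↔ (a, b) ∈ t ∧ b ≤ B.omega := by
  simp [asL1]

theorem mem_asL2 {A B : BD} {s t} {a b : ℕ} : (a, b) ∈ asL2 A B s t ↔
    (∃ c, (c, b) ∈ s ∧ a = c + A.omega) ∨ (1 ≤ b ∧ (a, b + B.omega) ∈ t) := by
  simp only [asL2, Finset.mem_union, Finset.mem_image, Finset.mem_filter, Prod.exists, Prod.mk.injEq]
  apply or_congr
  · constructor
    · rintro ⟨c, d, h1, rfl, rfl⟩; exact ⟨c, h1, rfl⟩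
    · rintro ⟨c, h1, rfl⟩; exact ⟨_, _, h1, rfl, rfl⟩
  · constructor
    · rintro ⟨c, d, ⟨h1, h2⟩, rfl, rfl⟩
      exact ⟨by omega, by rwa [Nat.sub_add_cancel h2.le]⟩
    · rintro ⟨h1, h2⟩; exact ⟨_, _, ⟨h2, by omega⟩, rfl, by omega⟩

theorem matching_iff {A B : BD} {s} : Matching A B s ↔
    (∀ a b, (a, b) ∈ s → a ∈ A.HfUp ∧ b ∈ B.HfDn) ∧
    (∀ a b c, (a, b) ∈ s → (a, c) ∈ s → b = c) ∧
    (∀ a b c, (a, c) ∈ s → (b, c) ∈ s → a = b) := by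
  constructor
  · rintro ⟨h1, h2, h3⟩
    exact ⟨fun a b h => h1 _ h, fun a b c h h' => (Prod.mk.inj (h2 _ h _ h' rfl)).2,
      fun a b c h h' => (Prod.mk.inj (h3 _ h _ h' rfl)).1⟩
  · rintro ⟨h1, h2, h3⟩
    refine ⟨fun p hp => h1 _ _ hp, ?_, ?_⟩
    · rintro ⟨a, b⟩ hp ⟨c, d⟩ hq h
      simp only at h; subst h; rw [h2 _ _ _ hp hq]
    · rintro ⟨a, b⟩ hp ⟨c, d⟩ hq h
      simp only at h; subst h; rw [h3 _ _ _ hp hq]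

section
variable {A B C : BD} (hA : A.Valid) (hB : B.Valid) (hC : C.Valid) {s t : Finset (ℕ × ℕ)}

theorem asR_cases (hs : Matching A B s) (ht : Matching (A.comp B s) C t) {a c : ℕ} (hA : A.Valid) (hB : B.Valid)
    (h : (a, c) ∈ t) : c ∈ C.HfDn ∧ ((a ≤ A.omega ∧ a ∈ A.HfUp ∧ ∀ b, (a, b) ∉ s) ∨
      ∃ b ∈ B.HfUp, a = b + A.omega) := by
  have h1 := ht.1 _ h
  rw [mem_HfUp_comp hA hB hs] at h1
  refine ⟨h1.2, ?_⟩
  rcases h1.1 with ⟨h2, h3⟩ | ⟨b, h2, h3⟩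
  · left; exact ⟨(Up_bd hA h2).2, h2, fun b hb => h3 _ hb rfl⟩
  · right; exact ⟨b, h2, h3.symm⟩

theorem asL_cases (hs : Matching B C s) (ht : Matching A (B.comp C s) t) {a c : ℕ} (hB : B.Valid) (hC : C.Valid)
    (h : (a, c) ∈ t) : a ∈ A.HfUp ∧ ((c ≤ B.omega ∧ c ∈ B.HfDn) ∨
      ∃ b ∈ C.HfDn, c = b + B.omega ∧ ∀ x, (x, b) ∉ s) := by
  have h1 := ht.1 _ h
  rw [mem_HfDn_comp hB hC hs] at h1
  refine ⟨h1.1, ?_⟩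
  rcases h1.2 with h2 | ⟨b, ⟨h2, h4⟩, h3⟩
  · left; exact ⟨(Dn_bd hB h2).2, h2⟩
  · right; exact ⟨b, h2, h3.symm, fun b hb => h4 _ hb rfl⟩

include hA hB hC

theorem asR1_matching (hs : Matching A B s) (ht : Matching (A.comp B s) C t) :
    Matching B C (asR1 A t) := by
  have hc := fun a c => @asR_cases A B C s t hs ht a c hA hB
  rw [matching_iff] at ht ⊢
  refine ⟨?_, ?_, ?_⟩
  · intro a b h
    rw [mem_asR1] at h
    obtain ⟨h1, h2⟩ := h
    obtain ⟨h3, h4 | ⟨b', h4, h5⟩⟩ := hc _ _ h2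
    · omega
    · have : a = b' := by omega
      subst this; exact ⟨h4, h3⟩
  · intro a b c h h'; rw [mem_asR1] at h h'; exact ht.2.1 _ _ _ h.2 h'.2
  · intro a b c h h'; rw [mem_asR1] at h h'
    have := ht.2.2 _ _ _ h.2 h'.2; omega

theorem asR2_matching (hs : Matching A B s) (ht : Matching (A.comp B s) C t) :
    Matching A (B.comp C (asR1 A t)) (asR2 A B s t) := by
  have hc := fun a c => @asR_cases A B C s t hs ht a c hA hB
  have hm := asR1_matching hA hB hC hs ht
  rw [matching_iff] at ht hs ⊢
  simp only [mem_HfDn_comp hB hC hm]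
  refine ⟨?_, ?_, ?_⟩
  · intro a b h
    rw [mem_asR2] at h
    rcases h with h | ⟨c, h1, h2, rfl⟩
    · have := hs.1 _ _ h
      exact ⟨this.1, Or.inl this.2⟩
    · obtain ⟨h3, ⟨_, h4, h6⟩ | ⟨b', h4, h5⟩⟩ := hc _ _ h1
      · refine ⟨h4, Or.inr ⟨c, ⟨h3, ?_⟩, rfl⟩⟩
        rintro ⟨p, q⟩ hp rfl
        rw [mem_asR1] at hp
        have := ht.2.2 _ _ _ hp.2 h1; omega
      · have := Up_bd hB h4; omega
  · intro a b c h h'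
    rw [mem_asR2] at h h'
    rcases h with h | ⟨c, h1, h2, rfl⟩ <;> rcases h' with h' | ⟨d, h1', h2', rfl⟩
    · exact hs.2.1 _ _ _ h h'
    · obtain ⟨h3, ⟨_, h4, h6⟩ | ⟨b', h4, h5⟩⟩ := hc _ _ h1'
      · exact absurd h (h6 _)
      · have := Up_bd hB h4; omega
    · obtain ⟨h3, ⟨_, h4, h6⟩ | ⟨b', h4, h5⟩⟩ := hc _ _ h1
      · exact absurd h' (h6 _)
      · have := Up_bd hB h4; omega
    · rw [ht.2.1 _ _ _ h1 h1']
  · intro a b c h h'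
    rw [mem_asR2] at h h'
    rcases h with h | ⟨c, h1, h2, rfl⟩ <;> rcases h' with h' | ⟨d, h1', h2', h3'⟩
    · exact hs.2.2 _ _ _ h h'
    · have := Dn_bd hB (hs.1 _ _ h).2
      have := Dn_bd hC (ht.1 _ _ h1').2; omega
    · have := Dn_bd hB (hs.1 _ _ h').2
      have := Dn_bd hC (ht.1 _ _ h1).2; omega
    · have : c = d := by omega
      subst this; exact ht.2.2 _ _ _ h1 h1'

theorem asL1_matching (hs : Matching B C s) (ht : Matching A (B.comp C s) t) :
    Matching A B (asL1 B t) := by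
  have hc := fun a c => @asL_cases A B C s t hs ht a c hB hC
  rw [matching_iff] at ht ⊢
  refine ⟨?_, ?_, ?_⟩
  · intro a b h
    rw [mem_asL1] at h
    obtain ⟨h3, h4 | ⟨b', h4, h5, _⟩⟩ := hc _ _ h.1
    · exact ⟨h3, h4.2⟩
    · have := Dn_bd hC h4; omega
  · intro a b c h h'; rw [mem_asL1] at h h'; exact ht.2.1 _ _ _ h.1 h'.1
  · intro a b c h h'; rw [mem_asL1] at h h'; exact ht.2.2 _ _ _ h.1 h'.1

theorem asL2_matching (hs : Matching B C s) (ht : Matching A (B.comp C s) t) :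
    Matching (A.comp B (asL1 B t)) C (asL2 A B s t) := by
  have hc := fun a c => @asL_cases A B C s t hs ht a c hB hC
  have hm := asL1_matching hA hB hC hs ht
  rw [matching_iff] at ht hs ⊢
  simp only [mem_HfUp_comp hA hB hm]
  refine ⟨?_, ?_, ?_⟩
  · intro a b h
    rw [mem_asL2] at h
    rcases h with ⟨c, h, rfl⟩ | ⟨h1, h2⟩
    · have := hs.1 _ _ h
      exact ⟨Or.inr ⟨_, this.1, rfl⟩, this.2⟩
    · obtain ⟨h3, h4 | ⟨b', h4, h5, h6⟩⟩ := hc _ _ h2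
      · omega
      · have : b = b' := by omega
        subst this
        refine ⟨Or.inl ⟨h3, ?_⟩, h4⟩
        rintro ⟨p, q⟩ hp rfl
        rw [mem_asL1] at hp
        have := ht.2.1 _ _ _ hp.1 h2; omega
  · intro a b c h h'
    rw [mem_asL2] at h h'
    rcases h with ⟨c, h, rfl⟩ | ⟨h1, h2⟩ <;> rcases h' with ⟨d, h', h4⟩ | ⟨h1', h2'⟩
    · have : c = d := by omega
      subst this; exact hs.2.1 _ _ _ h h'
    · have := Up_bd hB (hs.1 _ _ h).1
      have := Up_bd hA (ht.1 _ _ h2').1; omega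
    · have := Up_bd hB (hs.1 _ _ h').1
      have := Up_bd hA (ht.1 _ _ h2).1; omega
    · have := ht.2.1 _ _ _ h2 h2'; omega
  · intro a b c h h'
    rw [mem_asL2] at h h'
    rcases h with ⟨c, h, rfl⟩ | ⟨h1, h2⟩ <;> rcases h' with ⟨d, h', h4⟩ | ⟨h1', h2'⟩
    · have := hs.2.2 _ _ _ h h'; omega
    · obtain ⟨h3, h4 | ⟨b', h4, h5, h6⟩⟩ := hc _ _ h2'
      · omega
      · grind
    · obtain ⟨h3, h4 | ⟨b', h4, h5, h6⟩⟩ := hc _ _ h2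
      · omega
      · grind
    · exact ht.2.2 _ _ _ h2 h2'

theorem asLR1 (hs : Matching A B s) (ht : Matching (A.comp B s) C t) :
    asL1 B (asR2 A B s t) = s := by
  ext ⟨a, b⟩
  rw [mem_asL1, mem_asR2]
  constructor
  · rintro ⟨h | ⟨c, h1, h2, rfl⟩, h3⟩
    · exact h
    · have := Dn_bd hC (ht.1 _ h1).2; simp only at this; omega
  · intro h; exact ⟨Or.inl h, (Dn_bd hB (hs.1 _ h).2).2⟩

theorem asLR2 (hs : Matching A B s) (ht : Matching (A.comp B s) C t) :
    asL2 A B (asR1 A t) (asR2 A B s t) = t := by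
  ext ⟨a, b⟩
  simp only [mem_asL2, mem_asR2, mem_asR1]
  constructor
  · rintro (⟨c, ⟨h1, h2⟩, rfl⟩ | ⟨h1, h2 | ⟨c, h2, h3, h4⟩⟩)
    · exact h2
    · have := Dn_bd hB (hs.1 _ h2).2; simp only at this; omega
    · have : b = c := by omega
      subst this; exact h2
  · intro h
    have hb := Dn_bd hC (ht.1 _ h).2
    simp only at hb
    obtain ⟨h3, ⟨h4, _⟩ | ⟨b', h4, h5⟩⟩ := asR_cases hs ht hA hB h
    · right; exact ⟨hb.1, Or.inr ⟨b, h, h4, rfl⟩⟩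
    · left; subst h5; exact ⟨b', ⟨(Up_bd hB h4).1, h⟩, rfl⟩

theorem asRL1 (hs : Matching B C s) (ht : Matching A (B.comp C s) t) :
    asR1 A (asL2 A B s t) = s := by
  ext ⟨a, b⟩
  rw [mem_asR1, mem_asL2]
  constructor
  · rintro ⟨h1, ⟨c, h2, h3⟩ | ⟨h2, h3⟩⟩
    · have : a = c := by omega
      subst this; exact h2
    · have := Up_bd hA (ht.1 _ h3).1; simp only at this; omega
  · intro h; exact ⟨(Up_bd hB (hs.1 _ h).1).1, Or.inl ⟨a, h, rfl⟩⟩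

theorem asRL2 (hs : Matching B C s) (ht : Matching A (B.comp C s) t) :
    asR2 A B (asL1 B t) (asL2 A B s t) = t := by
  ext ⟨a, b⟩
  simp only [mem_asL2, mem_asR2, mem_asL1]
  constructor
  · rintro (⟨h1, h2⟩ | ⟨c, ⟨d, h1, h2⟩ | ⟨h1, h2⟩, h3, rfl⟩)
    · exact h1
    · have := Up_bd hB (hs.1 _ h1).1; simp only at this; omega
    · exact h2
  · intro h
    obtain ⟨h3, ⟨h4, _⟩ | ⟨b', h4, h5, _⟩⟩ := asL_cases hs ht hB hC h
    · left; exact ⟨h, h4⟩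
    · right; subst h5; exact ⟨b', Or.inr ⟨(Dn_bd hC h4).1, h⟩, (Up_bd hA h3).2, rfl⟩

theorem comp_assoc' (hs : Matching A B s) (ht : Matching (A.comp B s) C t) :
    (A.comp B s).comp C t = A.comp (B.comp C (asR1 A t)) (asR2 A B s t) := by
  refine bd_ext (List.append_assoc _ _ _) ?_ ?_ ?_
  · ext x
    simp only [mem_comp_up, comp_omega]
    constructor
    · rintro ((h | ⟨b, h, rfl⟩) | ⟨c, h, rfl⟩)
      · exact Or.inl h
      · exact Or.inr ⟨b, Or.inl h, rfl⟩
      · exact Or.inr ⟨_, Or.inr ⟨c, h, rfl⟩, by omega⟩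
    · rintro (h | ⟨b, h | ⟨c, h, rfl⟩, rfl⟩)
      · exact Or.inl (Or.inl h)
      · exact Or.inl (Or.inr ⟨b, h, rfl⟩)
      · exact Or.inr ⟨c, h, by omega⟩
  · ext x
    simp only [mem_comp_dn, comp_omega]
    constructor
    · rintro ((h | ⟨b, h, rfl⟩) | ⟨c, h, rfl⟩)
      · exact Or.inl h
      · exact Or.inr ⟨b, Or.inl h, rfl⟩
      · exact Or.inr ⟨_, Or.inr ⟨c, h, rfl⟩, by omega⟩
    · rintro (h | ⟨b, h | ⟨c, h, rfl⟩, rfl⟩)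
      · exact Or.inl (Or.inl h)
      · exact Or.inl (Or.inr ⟨b, h, rfl⟩)
      · exact Or.inr ⟨c, h, by omega⟩
  · ext ⟨x, y⟩
    simp only [mem_comp_ed, comp_omega, Prod.exists, Prod.mk.injEq, mem_asR1, mem_asR2]
    constructor
    · rintro ((h | ⟨a, b, h, rfl, rfl⟩ | ⟨a, b, h, rfl, rfl⟩) | ⟨a, b, h, rfl, rfl⟩ | ⟨a, b, h, rfl, rfl⟩)
      · exact Or.inl h
      · exact Or.inr (Or.inl ⟨a, b, Or.inl h, rfl, rfl⟩)
      · exact Or.inr (Or.inr ⟨a, b, Or.inl h, rfl, rfl⟩)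
      · obtain ⟨h3, ⟨h4, _⟩ | ⟨b', h4, rfl⟩⟩ := asR_cases hs ht hA hB h
        · exact Or.inr (Or.inl ⟨a, _, Or.inr ⟨b, h, h4, rfl⟩, rfl, by omega⟩)
        · exact Or.inr (Or.inr ⟨b', _, Or.inr (Or.inl ⟨b', b, ⟨(Up_bd hB h4).1, h⟩, rfl, rfl⟩), rfl, by omega⟩)
      · exact Or.inr (Or.inr ⟨_, _, Or.inr (Or.inr ⟨a, b, h, rfl, rfl⟩), by omega, by omega⟩)
    · rintro (h | ⟨a, b, h | ⟨c, h, h2, rfl⟩, rfl, rfl⟩ |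
        ⟨a, b, h | ⟨c, d, ⟨h, h2⟩, rfl, rfl⟩ | ⟨c, d, h, rfl, rfl⟩, rfl, rfl⟩)
      · exact Or.inl (Or.inl h)
      · exact Or.inl (Or.inr (Or.inl ⟨a, b, h, rfl, rfl⟩))
      · exact Or.inr (Or.inl ⟨a, c, h, rfl, by omega⟩)
      · exact Or.inl (Or.inr (Or.inr ⟨a, b, h, rfl, rfl⟩))
      · exact Or.inr (Or.inl ⟨_, d, h2, rfl, by omega⟩)
      · exact Or.inr (Or.inr ⟨c, d, h, by omega, by omega⟩)

end

theorem matchings_eps_left (B : BD) : matchings eps B = {∅} := by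
  ext s; rw [mem_matchings, Finset.mem_singleton]
  constructor
  · intro h; rw [Finset.eq_empty_iff_forall_notMem]; intro p hp
    have := (h.1 p hp).1; simp [BD.HfUp, eps] at this
  · rintro rfl; simp [Matching]

theorem matchings_eps_right (B : BD) : matchings B eps = {∅} := by
  ext s; rw [mem_matchings, Finset.mem_singleton]
  constructor
  · intro h; rw [Finset.eq_empty_iff_forall_notMem]; intro p hp
    have := (h.1 p hp).2; simp [BD.HfDn, eps] at this
  · rintro rfl; simp [Matching]

theorem comp_eps_left (B : BD) : comp eps B ∅ = B := by
  have : eps.omega = 0 := rfl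
  refine bd_ext ?_ ?_ ?_ ?_ <;> simp [comp, this] <;> simp [eps]

theorem comp_eps_right (B : BD) : comp B eps ∅ = B := by
  refine bd_ext ?_ ?_ ?_ ?_ <;> simp [comp, eps]

end BDH


namespace BDH
open BD

def glue (A : BD) (I1 I2 : Finset ℕ) : Finset ℕ := I1 ∪ I2.image (· + A.nv)

theorem glue_left {A : BD} {I1 I2 : Finset ℕ} (h2 : 0 ∉ I2) :
    ∀ i, 1 ≤ i → i ≤ A.nv → (i ∈ I1 ↔ i ∈ glue A I1 I2) := by
  intro i hi hn
  simp only [glue, Finset.mem_union, Finset.mem_image]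
  constructor
  · exact Or.inl
  · rintro (h | ⟨j, h, rfl⟩)
    · exact h
    · have : j = 0 := by omega
      subst this; contradiction

theorem glue_right {A : BD} {I1 I2 : Finset ℕ} (h1 : I1 ⊆ Finset.Icc 1 A.nv) :
    ∀ i, 1 ≤ i → (i ∈ I2 ↔ i + A.nv ∈ glue A I1 I2) := by
  intro i hi
  simp only [glue, Finset.mem_union, Finset.mem_image]
  constructor
  · intro h; exact Or.inr ⟨i, h, rfl⟩
  · rintro (h | ⟨j, h, h3⟩)
    · have := h1 h; simp only [Finset.mem_Icc] at this; omega
    · have : j = i := by omega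
      subst this; exact h

theorem glue_subset {A : BD} {n : ℕ} {I1 I2 : Finset ℕ} (h1 : I1 ⊆ Finset.Icc 1 A.nv)
    (h2 : I2 ⊆ Finset.Icc 1 n) : glue A I1 I2 ⊆ Finset.Icc 1 (A.nv + n) := by
  intro x hx
  simp only [glue, Finset.mem_union, Finset.mem_image] at hx
  rcases hx with h | ⟨j, h, rfl⟩
  · have := h1 h; simp only [Finset.mem_Icc] at *; omega
  · have := h2 h; simp only [Finset.mem_Icc] at *; omega

theorem glue_compl {A : BD} {n : ℕ} {I1 I2 : Finset ℕ} (h1 : I1 ⊆ Finset.Icc 1 A.nv)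
    (h2 : I2 ⊆ Finset.Icc 1 n) : Finset.Icc 1 (A.nv + n) \ glue A I1 I2 =
      glue A (Finset.Icc 1 A.nv \ I1) (Finset.Icc 1 n \ I2) := by
  ext x
  by_cases hx : x ≤ A.nv
  · by_cases hx0 : 1 ≤ x
    · rw [← glue_left (by simp) x hx0 hx]
      simp only [Finset.mem_sdiff, ← glue_left (zero_notMem h2) x hx0 hx, Finset.mem_Icc]
      grind
    · have : x = 0 := by omega
      subst this
      simp only [glue, Finset.mem_sdiff, Finset.mem_Icc, Finset.mem_union, Finset.mem_image]
      constructor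
      · omega
      · rintro (h | ⟨a, h, h3⟩) <;> omega
  · obtain ⟨y, rfl⟩ : ∃ y, x = y + A.nv := ⟨x - A.nv, by omega⟩
    rw [← glue_right Finset.sdiff_subset y (by omega)]
    simp only [Finset.mem_sdiff, ← glue_right h1 y (by omega), Finset.mem_Icc]
    grind

theorem glue_unglue {A : BD} {n : ℕ} {I : Finset ℕ} (h : I ⊆ Finset.Icc 1 (A.nv + n)) :
    glue A (I ∩ Finset.Icc 1 A.nv) (shift I A.nv) = I := by
  ext x
  simp only [glue, Finset.mem_union, Finset.mem_inter, Finset.mem_image, mem_shift, Finset.mem_Icc]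
  constructor
  · rintro (h | ⟨j, h, rfl⟩)
    · exact h.1
    · exact h.2
  · intro hx
    have := h hx; simp only [Finset.mem_Icc] at this
    by_cases hn : x ≤ A.nv
    · exact Or.inl ⟨hx, by omega⟩
    · exact Or.inr ⟨x - A.nv, ⟨by omega, by rwa [Nat.sub_add_cancel (by omega)]⟩, by omega⟩

theorem unglue1 {A : BD} {n : ℕ} {I1 I2 : Finset ℕ} (h1 : I1 ⊆ Finset.Icc 1 A.nv)
    (h2 : I2 ⊆ Finset.Icc 1 n) : glue A I1 I2 ∩ Finset.Icc 1 A.nv = I1 := by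
  ext x
  simp only [Finset.mem_inter, Finset.mem_Icc]
  constructor
  · rintro ⟨h, h3, h4⟩; exact (glue_left (zero_notMem h2) x h3 h4).2 h
  · intro h; have := Finset.mem_Icc.1 (h1 h)
    exact ⟨(glue_left (zero_notMem h2) x this.1 this.2).1 h, this⟩

theorem unglue2 {A : BD} {n : ℕ} {I1 I2 : Finset ℕ} (h1 : I1 ⊆ Finset.Icc 1 A.nv)
    (h2 : I2 ⊆ Finset.Icc 1 n) : shift (glue A I1 I2) A.nv = I2 := by
  ext x
  simp only [mem_shift]
  constructor
  · rintro ⟨h, h3⟩; exact (glue_right h1 x h).2 h3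
  · intro h; have := Finset.mem_Icc.1 (h2 h)
    exact ⟨this.1, (glue_right h1 x this.1).1 h⟩

def res (A B : BD) (I1 I2 : Finset ℕ) (s : Finset (ℕ × ℕ)) : Finset (ℕ × ℕ) :=
  (s.filter (fun p => p.1 ∈ A.HI I1 ∧ p.2 ∈ B.HI I2)).image (fun p => (A.phi I1 p.1, B.phi I2 p.2))

def lft (A B : BD) (I1 I2 : Finset ℕ) (s : Finset (ℕ × ℕ)) : Finset (ℕ × ℕ) :=
  (A.HI I1 ×ˢ B.HI I2).filter (fun p => (A.phi I1 p.1, B.phi I2 p.2) ∈ s)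

theorem mem_lft {A B : BD} {I1 I2 : Finset ℕ} {s} {a b : ℕ} :
    (a, b) ∈ lft A B I1 I2 s ↔ (a ∈ A.HI I1 ∧ b ∈ B.HI I2) ∧ (A.phi I1 a, B.phi I2 b) ∈ s := by
  simp [lft]

theorem mem_res {A B : BD} {I1 I2 : Finset ℕ} {s} {x : ℕ × ℕ} :
    x ∈ res A B I1 I2 s ↔ ∃ a b, (a, b) ∈ s ∧ a ∈ A.HI I1 ∧ b ∈ B.HI I2 ∧
      x = (A.phi I1 a, B.phi I2 b) := by
  simp only [res, Finset.mem_image, Finset.mem_filter, Prod.exists]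
  constructor
  · rintro ⟨a, b, ⟨h1, h2, h3⟩, rfl⟩; exact ⟨a, b, h1, h2, h3, rfl⟩
  · rintro ⟨a, b, h1, h2, h3, rfl⟩; exact ⟨a, b, ⟨h1, h2, h3⟩, rfl⟩

theorem phi_mem_res {A B : BD} {I1 I2 : Finset ℕ} {s} {a b : ℕ} (ha : a ∈ A.HI I1) (hb : b ∈ B.HI I2) :
    (A.phi I1 a, B.phi I2 b) ∈ res A B I1 I2 s ↔ (a, b) ∈ s := by
  rw [mem_res]
  constructor
  · rintro ⟨c, d, h, h1, h2, h3⟩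
    rw [Prod.mk.injEq, phi_inj ha h1, phi_inj hb h2] at h3
    rw [h3.1, h3.2]; exact h
  · intro h; exact ⟨a, b, h, ha, hb, rfl⟩

section
variable {A B : BD} {s : Finset (ℕ × ℕ)} {I1 I2 : Finset ℕ}

theorem HI_comp_left (h2 : 0 ∉ I2) {k : ℕ} (hk : k ≤ A.omega) :
    k ∈ (A.comp B s).HI (glue A I1 I2) ↔ k ∈ A.HI I1 := by
  rw [mem_HI, mem_HI, comp_v_left hk, comp_omega]
  constructor
  · rintro ⟨h, h3⟩; exact ⟨⟨h.1, hk⟩, (glue_left h2 _ (v_pos ⟨h.1, hk⟩) (v_le _ _)).2 h3⟩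
  · rintro ⟨h, h3⟩; exact ⟨⟨h.1, by omega⟩, (glue_left h2 _ (v_pos ⟨h.1, hk⟩) (v_le _ _)).1 h3⟩

theorem HI_comp_right (h1 : I1 ⊆ Finset.Icc 1 A.nv) {k : ℕ} (hk : 1 ≤ k) :
    k + A.omega ∈ (A.comp B s).HI (glue A I1 I2) ↔ k ∈ B.HI I2 := by
  rw [mem_HI, mem_HI, comp_v_right hk, comp_omega]
  constructor
  · rintro ⟨h, h3⟩
    have : 1 ≤ k ∧ k ≤ B.omega := by omega
    exact ⟨this, (glue_right h1 _ (v_pos this)).2 h3⟩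
  · rintro ⟨h, h3⟩; exact ⟨by omega, (glue_right h1 _ (v_pos h)).1 h3⟩

theorem phi_comp_left (h1 : I1 ⊆ Finset.Icc 1 A.nv) (h2 : 0 ∉ I2) {k : ℕ} (hk : k ≤ A.omega) :
    (A.comp B s).phi (glue A I1 I2) k = A.phi I1 k :=
  phi_append_left (glue_left h2) (glue_right h1) hk

theorem phi_comp_right (h1 : I1 ⊆ Finset.Icc 1 A.nv) (h2 : 0 ∉ I2) (k : ℕ) :
    (A.comp B s).phi (glue A I1 I2) (k + A.omega) = B.phi I2 k + (A.sub I1).omega := by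
  rw [sub_omega, add_comm (B.phi I2 k)]
  exact phi_append_right (glue_left h2) (glue_right h1)

theorem sub_comp (hA : A.Valid) (hB : B.Valid) (hs : Matching A B s)
    (h1 : I1 ⊆ Finset.Icc 1 A.nv) (h2 : 0 ∉ I2) :
    (A.comp B s).sub (glue A I1 I2) = (A.sub I1).comp (B.sub I2) (res A B I1 I2 s) := by
  refine bd_ext (sL_append (glue_left h2) (glue_right h1)) ?_ ?_ ?_
  · ext x
    simp only [mem_comp_up, mem_sub_up]
    constructor
    · rintro ⟨a, h | ⟨b, h, rfl⟩, h3, rfl⟩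
      · have hb := (Valid.up_bd hA h).2
        rw [HI_comp_left h2 hb] at h3
        rw [phi_comp_left h1 h2 hb]; exact Or.inl ⟨a, h, h3, rfl⟩
      · have hb := (Valid.up_bd hB h).1
        rw [HI_comp_right h1 hb] at h3
        rw [phi_comp_right h1 h2]; exact Or.inr ⟨_, ⟨b, h, h3, rfl⟩, rfl⟩
    · rintro (⟨a, h, h3, rfl⟩ | ⟨_, ⟨b, h, h3, rfl⟩, rfl⟩)
      · have hb := (Valid.up_bd hA h).2
        exact ⟨a, Or.inl h, (HI_comp_left h2 hb).2 h3, phi_comp_left h1 h2 hb⟩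
      · have hb := (Valid.up_bd hB h).1
        exact ⟨_, Or.inr ⟨b, h, rfl⟩, (HI_comp_right h1 hb).2 h3, phi_comp_right h1 h2 b⟩
  · ext x
    simp only [mem_comp_dn, mem_sub_dn]
    constructor
    · rintro ⟨a, h | ⟨b, h, rfl⟩, h3, rfl⟩
      · have hb := (Valid.dn_bd hA h).2
        rw [HI_comp_left h2 hb] at h3
        rw [phi_comp_left h1 h2 hb]; exact Or.inl ⟨a, h, h3, rfl⟩
      · have hb := (Valid.dn_bd hB h).1
        rw [HI_comp_right h1 hb] at h3
        rw [phi_comp_right h1 h2]; exact Or.inr ⟨_, ⟨b, h, h3, rfl⟩, rfl⟩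
    · rintro (⟨a, h, h3, rfl⟩ | ⟨_, ⟨b, h, h3, rfl⟩, rfl⟩)
      · have hb := (Valid.dn_bd hA h).2
        exact ⟨a, Or.inl h, (HI_comp_left h2 hb).2 h3, phi_comp_left h1 h2 hb⟩
      · have hb := (Valid.dn_bd hB h).1
        exact ⟨_, Or.inr ⟨b, h, rfl⟩, (HI_comp_right h1 hb).2 h3, phi_comp_right h1 h2 b⟩
  · ext x
    simp only [mem_comp_ed, mem_sub_ed (comp_valid hA hB hs), mem_sub_ed hA, mem_sub_ed hB]
    constructor
    · rintro ⟨_, h | ⟨p, h, rfl⟩ | ⟨p, h, rfl⟩, h3, h4, rfl⟩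
      · have hb := (Valid.up_bd hA (Valid.ed_up hA h)).2
        have hc := (Valid.dn_bd hA (Valid.ed_dn hA h)).2
        rw [HI_comp_left h2 hb] at h3
        rw [HI_comp_left h2 hc] at h4
        rw [phi_comp_left h1 h2 hb, phi_comp_left h1 h2 hc]
        exact Or.inl ⟨_, h, h3, h4, rfl⟩
      · have hb := (Up_bd hA (hs.1 p h).1).2
        have hc := (Dn_bd hB (hs.1 p h).2).1
        simp only at h3 h4 ⊢
        rw [HI_comp_left h2 hb] at h3
        rw [HI_comp_right h1 hc] at h4
        rw [phi_comp_left h1 h2 hb, phi_comp_right h1 h2]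
        exact Or.inr (Or.inl ⟨_, mem_res.2 ⟨p.1, p.2, h, h3, h4, rfl⟩, rfl⟩)
      · have hb := (Valid.up_bd hB (Valid.ed_up hB h)).1
        have hc := (Valid.dn_bd hB (Valid.ed_dn hB h)).1
        simp only at h3 h4 ⊢
        rw [HI_comp_right h1 hb] at h3
        rw [HI_comp_right h1 hc] at h4
        rw [phi_comp_right h1 h2, phi_comp_right h1 h2]
        exact Or.inr (Or.inr ⟨_, ⟨_, h, h3, h4, rfl⟩, rfl⟩)
    · rintro (⟨p, h, h3, h4, rfl⟩ | ⟨_, hr, rfl⟩ | ⟨_, ⟨p, h, h3, h4, rfl⟩, rfl⟩)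
      · have hb := (Valid.up_bd hA (Valid.ed_up hA h)).2
        have hc := (Valid.dn_bd hA (Valid.ed_dn hA h)).2
        refine ⟨p, Or.inl h, (HI_comp_left h2 hb).2 h3, (HI_comp_left h2 hc).2 h4, ?_⟩
        rw [phi_comp_left h1 h2 hb, phi_comp_left h1 h2 hc]
      · obtain ⟨a, b, h, h3, h4, rfl⟩ := mem_res.1 hr
        have hb := (Up_bd hA (hs.1 _ h).1).2
        have hc := (Dn_bd hB (hs.1 _ h).2).1
        simp only at hb hc
        refine ⟨(a, b + A.omega), Or.inr (Or.inl ⟨_, h, rfl⟩), (HI_comp_left h2 hb).2 h3,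
          (HI_comp_right h1 hc).2 h4, ?_⟩
        simp only
        rw [phi_comp_left h1 h2 hb, phi_comp_right h1 h2]
      · have hb := (Valid.up_bd hB (Valid.ed_up hB h)).1
        have hc := (Valid.dn_bd hB (Valid.ed_dn hB h)).1
        refine ⟨(p.1 + A.omega, p.2 + A.omega), Or.inr (Or.inr ⟨_, h, rfl⟩), (HI_comp_right h1 hb).2 h3,
          (HI_comp_right h1 hc).2 h4, ?_⟩
        simp only
        rw [phi_comp_right h1 h2, phi_comp_right h1 h2]

theorem v_glue_left (h2 : 0 ∉ I2) {k : ℕ} (hk : 1 ≤ k ∧ k ≤ A.omega) :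
    (A.comp B s).v k ∈ glue A I1 I2 ↔ A.v k ∈ I1 := by
  rw [comp_v_left hk.2]; exact (glue_left h2 _ (v_pos hk) (v_le _ _)).symm

theorem v_glue_right (h1 : I1 ⊆ Finset.Icc 1 A.nv) {k : ℕ} (hk : 1 ≤ k ∧ k ≤ B.omega) :
    (A.comp B s).v (k + A.omega) ∈ glue A I1 I2 ↔ B.v k ∈ I2 := by
  rw [comp_v_right hk.1]; exact (glue_right h1 _ (v_pos hk)).symm

theorem iso_comp (hA : A.Valid) (hB : B.Valid) (hs : Matching A B s)
    (h1 : I1 ⊆ Finset.Icc 1 A.nv) (h2 : 0 ∉ I2) :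
    (A.comp B s).Isolated (glue A I1 I2) ↔ A.Isolated I1 ∧ B.Isolated I2 ∧
      ∀ p ∈ s, (A.v p.1 ∈ I1 ↔ B.v p.2 ∈ I2) := by
  constructor
  · intro h
    refine ⟨fun p hp => ?_, fun p hp => ?_, fun p hp => ?_⟩
    · have := h p (mem_comp_ed.2 (Or.inl hp))
      rwa [v_glue_left h2 (Valid.up_bd hA (Valid.ed_up hA hp)),
        v_glue_left h2 (Valid.dn_bd hA (Valid.ed_dn hA hp))] at this
    · have := h _ (mem_comp_ed.2 (Or.inr (Or.inr ⟨p, hp, rfl⟩)))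
      rwa [v_glue_right h1 (Valid.up_bd hB (Valid.ed_up hB hp)),
        v_glue_right h1 (Valid.dn_bd hB (Valid.ed_dn hB hp))] at this
    · have := h _ (mem_comp_ed.2 (Or.inr (Or.inl ⟨p, hp, rfl⟩)))
      rwa [v_glue_left h2 (Up_bd hA (hs.1 p hp).1), v_glue_right h1 (Dn_bd hB (hs.1 p hp).2)] at this
  · rintro ⟨g1, g2, g3⟩ q hq
    rcases mem_comp_ed.1 hq with hp | ⟨p, hp, rfl⟩ | ⟨p, hp, rfl⟩
    · rw [v_glue_left h2 (Valid.up_bd hA (Valid.ed_up hA hp)),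
        v_glue_left h2 (Valid.dn_bd hA (Valid.ed_dn hA hp))]
      exact g1 _ hp
    · rw [v_glue_left h2 (Up_bd hA (hs.1 p hp).1), v_glue_right h1 (Dn_bd hB (hs.1 p hp).2)]
      exact g3 _ hp
    · rw [v_glue_right h1 (Valid.up_bd hB (Valid.ed_up hB hp)),
        v_glue_right h1 (Valid.dn_bd hB (Valid.ed_dn hB hp))]
      exact g2 _ hp

theorem res_matching (hA : A.Valid) (hB : B.Valid) (hs : Matching A B s)
    (h1 : A.Isolated I1) (h2 : B.Isolated I2) :
    Matching (A.sub I1) (B.sub I2) (res A B I1 I2 s) := by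
  rw [matching_iff] at hs
  refine ⟨?_, ?_, ?_⟩
  · intro x hx
    obtain ⟨a, b, h, h3, h4, rfl⟩ := mem_res.1 hx
    exact ⟨(mem_HfUp_sub hA h1).2 ⟨a, (hs.1 _ _ h).1, h3, rfl⟩,
      (mem_HfDn_sub hB h2).2 ⟨b, (hs.1 _ _ h).2, h4, rfl⟩⟩
  · intro x hx y hy hxy
    obtain ⟨a, b, h, h3, h4, rfl⟩ := mem_res.1 hx
    obtain ⟨c, d, h', h3', h4', rfl⟩ := mem_res.1 hy
    simp only [phi_inj h3 h3'] at hxy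
    subst hxy; rw [hs.2.1 _ _ _ h h']
  · intro x hx y hy hxy
    obtain ⟨a, b, h, h3, h4, rfl⟩ := mem_res.1 hx
    obtain ⟨c, d, h', h3', h4', rfl⟩ := mem_res.1 hy
    simp only [phi_inj h4 h4'] at hxy
    subst hxy; rw [hs.2.2 _ _ _ h h']

theorem HI_disj {G : BD} {I : Finset ℕ} {n a : ℕ} (h : a ∈ G.HI I) (h' : a ∈ G.HI (Finset.Icc 1 n \ I)) :
    False := by
  have h1 := (mem_HI.1 h).2
  have h2 := (mem_HI.1 h').2
  simp at h2; exact h2.2 h1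

variable {s1 s2 : Finset (ℕ × ℕ)}

theorem lft_free (hA : A.Valid) (hB : B.Valid) (h1 : A.Isolated I1) (h2 : B.Isolated I2)
    (hs : Matching (A.sub I1) (B.sub I2) s) {a b : ℕ} (h : (a, b) ∈ lft A B I1 I2 s) :
    a ∈ A.HfUp ∧ b ∈ B.HfDn := by
  obtain ⟨⟨ha, hb⟩, h⟩ := mem_lft.1 h
  have := hs.1 _ h
  rw [mem_HfUp_sub hA h1, mem_HfDn_sub hB h2] at this
  obtain ⟨⟨a', h3, h4, h5⟩, ⟨b', h6, h7, h8⟩⟩ := this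
  simp only [phi_inj h4 ha, phi_inj h7 hb] at h5 h8
  subst h5 h8; exact ⟨h3, h6⟩

theorem lft_matching (hA : A.Valid) (hB : B.Valid) (h1 : A.Isolated I1) (h2 : B.Isolated I2)
    (hs1 : Matching (A.sub I1) (B.sub I2) s1)
    (hs2 : Matching (A.sub (Finset.Icc 1 A.nv \ I1)) (B.sub (Finset.Icc 1 B.nv \ I2)) s2) :
    Matching A B (lft A B I1 I2 s1 ∪ lft A B (Finset.Icc 1 A.nv \ I1) (Finset.Icc 1 B.nv \ I2) s2) := by
  have f1 := fun a b => @lft_free A B s1 I1 I2 hA hB h1 h2 hs1 a b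
  have f2 := fun a b => @lft_free A B s2 _ _ hA hB (iso_compl hA h1) (iso_compl hB h2) hs2 a b
  rw [matching_iff] at hs1 hs2 ⊢
  simp only [Finset.mem_union]
  refine ⟨?_, ?_, ?_⟩
  · rintro a b (h | h)
    · exact f1 _ _ h
    · exact f2 _ _ h
  · rintro a b c (h | h) (h' | h') <;> rw [mem_lft] at h h'
    · exact (phi_inj h.1.2 h'.1.2).1 (hs1.2.1 _ _ _ h.2 h'.2)
    · exact (HI_disj h.1.1 h'.1.1).elim
    · exact (HI_disj h'.1.1 h.1.1).elim
    · exact (phi_inj h.1.2 h'.1.2).1 (hs2.2.1 _ _ _ h.2 h'.2)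
  · rintro a b c (h | h) (h' | h') <;> rw [mem_lft] at h h'
    · exact (phi_inj h.1.1 h'.1.1).1 (hs1.2.2 _ _ _ h.2 h'.2)
    · exact (HI_disj h.1.2 h'.1.2).elim
    · exact (HI_disj h'.1.2 h.1.2).elim
    · exact (phi_inj h.1.1 h'.1.1).1 (hs2.2.2 _ _ _ h.2 h'.2)

theorem lft_resp : ∀ p ∈ lft A B I1 I2 s1 ∪ lft A B (Finset.Icc 1 A.nv \ I1) (Finset.Icc 1 B.nv \ I2) s2,
    (A.v p.1 ∈ I1 ↔ B.v p.2 ∈ I2) := by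
  rintro ⟨a, b⟩ h
  rw [Finset.mem_union, mem_lft, mem_lft] at h
  simp only [mem_HI, Finset.mem_sdiff] at h ⊢
  grind

theorem res_lft1 (hA : A.Valid) (hB : B.Valid) (h1 : A.Isolated I1) (h2 : B.Isolated I2)
    (hs1 : Matching (A.sub I1) (B.sub I2) s1) :
    res A B I1 I2 (lft A B I1 I2 s1 ∪
      lft A B (Finset.Icc 1 A.nv \ I1) (Finset.Icc 1 B.nv \ I2) s2) = s1 := by
  ext x
  rw [mem_res]
  constructor
  · rintro ⟨a, b, h, h3, h4, rfl⟩
    rw [Finset.mem_union, mem_lft, mem_lft] at h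
    rcases h with h | h
    · exact h.2
    · exact (HI_disj h3 h.1.1).elim
  · intro hx
    have := hs1.1 _ hx
    rw [mem_HfUp_sub hA h1, mem_HfDn_sub hB h2] at this
    obtain ⟨⟨a, h3, h4, h5⟩, ⟨b, h6, h7, h8⟩⟩ := this
    have e : x = (A.phi I1 a, B.phi I2 b) := by rw [h5, h8]
    refine ⟨a, b, Finset.mem_union_left _ (mem_lft.2 ⟨⟨h4, h7⟩, ?_⟩), h4, h7, e⟩
    rwa [← e]

theorem res_lft2 (hA : A.Valid) (hB : B.Valid) (h1 : A.Isolated I1) (h2 : B.Isolated I2)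
    (hs2 : Matching (A.sub (Finset.Icc 1 A.nv \ I1)) (B.sub (Finset.Icc 1 B.nv \ I2)) s2) :
    res A B (Finset.Icc 1 A.nv \ I1) (Finset.Icc 1 B.nv \ I2) (lft A B I1 I2 s1 ∪
      lft A B (Finset.Icc 1 A.nv \ I1) (Finset.Icc 1 B.nv \ I2) s2) = s2 := by
  ext x
  rw [mem_res]
  constructor
  · rintro ⟨a, b, h, h3, h4, rfl⟩
    rw [Finset.mem_union, mem_lft, mem_lft] at h
    rcases h with h | h
    · exact (HI_disj h.1.1 h3).elim
    · exact h.2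
  · intro hx
    have := hs2.1 _ hx
    rw [mem_HfUp_sub hA (iso_compl hA h1), mem_HfDn_sub hB (iso_compl hB h2)] at this
    obtain ⟨⟨a, h3, h4, h5⟩, ⟨b, h6, h7, h8⟩⟩ := this
    have e : x = (A.phi (Finset.Icc 1 A.nv \ I1) a, B.phi (Finset.Icc 1 B.nv \ I2) b) := by rw [h5, h8]
    refine ⟨a, b, Finset.mem_union_right _ (mem_lft.2 ⟨⟨h4, h7⟩, ?_⟩), h4, h7, e⟩
    rwa [← e]

theorem lft_res (hA : A.Valid) (hB : B.Valid) (hs : Matching A B s)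
    (hr : ∀ p ∈ s, (A.v p.1 ∈ I1 ↔ B.v p.2 ∈ I2)) :
    lft A B I1 I2 (res A B I1 I2 s) ∪
      lft A B (Finset.Icc 1 A.nv \ I1) (Finset.Icc 1 B.nv \ I2)
        (res A B (Finset.Icc 1 A.nv \ I1) (Finset.Icc 1 B.nv \ I2) s) = s := by
  ext ⟨a, b⟩
  rw [Finset.mem_union, mem_lft, mem_lft]
  constructor
  · rintro (⟨⟨h1, h2⟩, h3⟩ | ⟨⟨h1, h2⟩, h3⟩) <;> rwa [phi_mem_res h1 h2] at h3
  · intro h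
    have hh := hr _ h
    have ha := Up_bd hA (hs.1 _ h).1
    have hb := Dn_bd hB (hs.1 _ h).2
    simp only at hh ha hb
    by_cases hv : A.v a ∈ I1
    · have h1 : a ∈ A.HI I1 := mem_HI.2 ⟨ha, hv⟩
      have h2 : b ∈ B.HI I2 := mem_HI.2 ⟨hb, hh.1 hv⟩
      exact Or.inl ⟨⟨h1, h2⟩, (phi_mem_res h1 h2).2 h⟩
    · have h1 : a ∈ A.HI (Finset.Icc 1 A.nv \ I1) :=
        mem_HI.2 ⟨ha, Finset.mem_sdiff.2 ⟨Finset.mem_Icc.2 ⟨v_pos ha, v_le _ _⟩, hv⟩⟩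
      have h2 : b ∈ B.HI (Finset.Icc 1 B.nv \ I2) :=
        mem_HI.2 ⟨hb, Finset.mem_sdiff.2 ⟨Finset.mem_Icc.2 ⟨v_pos hb, v_le _ _⟩, mt hh.2 hv⟩⟩
      exact Or.inr ⟨⟨h1, h2⟩, (phi_mem_res h1 h2).2 h⟩

end

end BDH


namespace BDH
open BD

open scoped Classical in
noncomputable def isoF (G : BD) : Finset (Finset ℕ) :=
  (Finset.Icc 1 G.nv).powerset.filter (fun I => G.Isolated I)

theorem mem_isoF {G : BD} {I : Finset ℕ} : I ∈ isoF G ↔ I ⊆ Finset.Icc 1 G.nv ∧ G.Isolated I := by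
  simp [isoF]

open scoped Classical in
noncomputable def isoIn (G : BD) (I : Finset ℕ) : Finset (Finset ℕ) :=
  I.powerset.filter (fun K => G.Isolated K)

theorem mem_isoIn {G : BD} {I K : Finset ℕ} : K ∈ isoIn G I ↔ K ⊆ I ∧ G.Isolated K := by
  simp [isoIn]

section
variable {V : Type*} [AddCommMonoid V]

theorem sum_assoc {A B C : BD} (hA : A.Valid) (hB : B.Valid) (hC : C.Valid) (F : BD → V) :
    ∑ s ∈ matchings A B, ∑ t ∈ matchings (A.comp B s) C, F ((A.comp B s).comp C t) =
    ∑ s ∈ matchings B C, ∑ t ∈ matchings A (B.comp C s), F (A.comp (B.comp C s) t) := by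
  rw [Finset.sum_sigma', Finset.sum_sigma']
  refine Finset.sum_bij' (fun x _ => ⟨asR1 A x.2, asR2 A B x.1 x.2⟩)
    (fun x _ => ⟨asL1 B x.2, asL2 A B x.1 x.2⟩) ?_ ?_ ?_ ?_ ?_
  · rintro ⟨s, t⟩ h
    simp only [Finset.mem_sigma, mem_matchings] at h ⊢
    exact ⟨asR1_matching hA hB hC h.1 h.2, asR2_matching hA hB hC h.1 h.2⟩
  · rintro ⟨s, t⟩ h
    simp only [Finset.mem_sigma, mem_matchings] at h ⊢
    exact ⟨asL1_matching hA hB hC h.1 h.2, asL2_matching hA hB hC h.1 h.2⟩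
  · rintro ⟨s, t⟩ h
    simp only [Finset.mem_sigma, mem_matchings] at h ⊢
    rw [asLR1 hA hB hC h.1 h.2, asLR2 hA hB hC h.1 h.2]
  · rintro ⟨s, t⟩ h
    simp only [Finset.mem_sigma, mem_matchings] at h ⊢
    rw [asRL1 hA hB hC h.1 h.2, asRL2 hA hB hC h.1 h.2]
  · rintro ⟨s, t⟩ h
    simp only [Finset.mem_sigma, mem_matchings] at h ⊢
    rw [comp_assoc' hA hB hC h.1 h.2]

theorem filter_image_rank {I J : Finset ℕ} (hJ : J ⊆ Finset.Icc 1 I.card) :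
    (I.filter (fun i => rank I i ∈ J)).image (rank I) = J := by
  ext x
  simp only [Finset.mem_image, Finset.mem_filter]
  constructor
  · rintro ⟨a, ⟨_, h⟩, rfl⟩; exact h
  · intro h
    have := hJ h
    rw [← rank_image, Finset.mem_image] at this
    obtain ⟨a, ha, rfl⟩ := this
    exact ⟨a, ⟨ha, h⟩, rfl⟩

theorem image_filter_rank {I K : Finset ℕ} (hK : K ⊆ I) :
    I.filter (fun i => rank I i ∈ K.image (rank I)) = K := by
  ext x
  simp only [Finset.mem_image, Finset.mem_filter]
  constructor
  · rintro ⟨hx, a, ha, h⟩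
    rw [rank_inj (hK ha) hx] at h; exact h ▸ ha
  · intro h; exact ⟨hK h, x, h, rfl⟩

theorem sum_sub {G : BD} (h : G.Valid) {I : Finset ℕ} (hI : I ∈ isoF G) (F : BD → BD → V) :
    ∑ J ∈ isoF (G.sub I), F ((G.sub I).sub J) ((G.sub I).sub (Finset.Icc 1 (G.sub I).nv \ J)) =
    ∑ K ∈ isoIn G I, F (G.sub K) (G.sub (I \ K)) := by
  rw [mem_isoF] at hI
  have h0 := zero_notMem hI.1
  have hn := sub_nv hI.1
  refine Finset.sum_bij' (fun J _ => I.filter (fun i => rank I i ∈ J))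
    (fun K _ => K.image (rank I)) ?_ ?_ ?_ ?_ ?_
  · intro J hJ
    rw [mem_isoF] at hJ; rw [mem_isoIn]
    exact ⟨Finset.filter_subset _ _, (iso_sub h h0 hI.2).1 hJ.2⟩
  · intro K hK
    rw [mem_isoIn] at hK; rw [mem_isoF, iso_sub h h0 hI.2, image_filter_rank hK.1, hn, ← rank_image]
    exact ⟨Finset.image_subset_image hK.1, hK.2⟩
  · intro J hJ
    rw [mem_isoF, hn] at hJ
    exact filter_image_rank hJ.1
  · intro K hK
    rw [mem_isoIn] at hK
    exact image_filter_rank hK.1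
  · intro J hJ
    rw [mem_isoF] at hJ
    rw [sub_sub h h0, sub_sub h h0]
    congr 2
    ext x
    simp only [Finset.mem_filter, Finset.mem_sdiff, hn, Finset.mem_Icc]
    constructor
    · rintro ⟨h1, h2, h3⟩; exact ⟨h1, fun h4 => h3 h4.2⟩
    · rintro ⟨h1, h2⟩; exact ⟨h1, ⟨rank_pos h1, rank_le_card _ _⟩, fun h4 => h2 ⟨h1, h4⟩⟩

theorem sum_coassoc {G : BD} (h : G.Valid) (F : BD → BD → BD → V) :
    ∑ I ∈ isoF G, ∑ J ∈ isoF (G.sub I), F ((G.sub I).sub J)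
      ((G.sub I).sub (Finset.Icc 1 (G.sub I).nv \ J)) (G.sub (Finset.Icc 1 G.nv \ I)) =
    ∑ I ∈ isoF G, ∑ J ∈ isoF (G.sub (Finset.Icc 1 G.nv \ I)), F (G.sub I)
      ((G.sub (Finset.Icc 1 G.nv \ I)).sub J)
      ((G.sub (Finset.Icc 1 G.nv \ I)).sub (Finset.Icc 1 (G.sub (Finset.Icc 1 G.nv \ I)).nv \ J)) := by
  have hc : ∀ I ∈ isoF G, Finset.Icc 1 G.nv \ I ∈ isoF G := by
    intro I hI; rw [mem_isoF] at *; exact ⟨Finset.sdiff_subset, iso_compl h hI.2⟩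
  rw [Finset.sum_congr rfl fun I hI => sum_sub h hI (fun X Y => F X Y (G.sub (Finset.Icc 1 G.nv \ I))),
    Finset.sum_congr rfl fun I hI => sum_sub h (hc I hI) (fun X Y => F (G.sub I) X Y)]
  rw [Finset.sum_sigma', Finset.sum_sigma']
  refine Finset.sum_bij' (fun x _ => ⟨x.2, x.1 \ x.2⟩) (fun x _ => ⟨x.1 ∪ x.2, x.1⟩) ?_ ?_ ?_ ?_ ?_
  · rintro ⟨I, K⟩ hx
    simp only [Finset.mem_sigma, mem_isoF, mem_isoIn] at hx ⊢
    obtain ⟨⟨h1, h2⟩, h3, h4⟩ := hx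
    exact ⟨⟨h3.trans h1, h4⟩, Finset.sdiff_subset_sdiff h1 subset_rfl, iso_sdiff h2 h4⟩
  · rintro ⟨I, K⟩ hx
    simp only [Finset.mem_sigma, mem_isoF, mem_isoIn] at hx ⊢
    obtain ⟨⟨h1, h2⟩, h3, h4⟩ := hx
    exact ⟨⟨Finset.union_subset h1 (h3.trans Finset.sdiff_subset), iso_union h2 h4⟩,
      Finset.subset_union_left, h2⟩
  · rintro ⟨I, K⟩ hx
    simp only [Finset.mem_sigma, mem_isoF, mem_isoIn] at hx ⊢
    obtain ⟨⟨h1, h2⟩, h3, h4⟩ := hx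
    simp [h3]
  · rintro ⟨I, K⟩ hx
    simp only [Finset.mem_sigma, mem_isoF, mem_isoIn] at hx ⊢
    obtain ⟨⟨h1, h2⟩, h3, h4⟩ := hx
    have : (I ∪ K) \ I = K := by
      ext x; have := @h3 x; simp at this ⊢; tauto
    rw [this]
  · rintro ⟨I, K⟩ hx
    simp only [Finset.mem_sigma, mem_isoF, mem_isoIn] at hx ⊢
    obtain ⟨⟨h1, h2⟩, h3, h4⟩ := hx
    congr 2
    ext x; have := @h3 x; simp at this ⊢; tauto

theorem sum_mul {A B : BD} (hA : A.Valid) (hB : B.Valid) (F : BD → BD → V) :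
    ∑ s ∈ matchings A B, ∑ I ∈ isoF (A.comp B s), F ((A.comp B s).sub I)
      ((A.comp B s).sub (Finset.Icc 1 (A.comp B s).nv \ I)) =
    ∑ I ∈ isoF A, ∑ J ∈ isoF B, ∑ s ∈ matchings (A.sub I) (B.sub J),
      ∑ t ∈ matchings (A.sub (Finset.Icc 1 A.nv \ I)) (B.sub (Finset.Icc 1 B.nv \ J)),
      F ((A.sub I).comp (B.sub J) s)
        ((A.sub (Finset.Icc 1 A.nv \ I)).comp (B.sub (Finset.Icc 1 B.nv \ J)) t) := by
  have hsh : ∀ (s : Finset (ℕ × ℕ)) (I : Finset ℕ), I ⊆ Finset.Icc 1 (A.comp B s).nv →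
      shift I A.nv ⊆ Finset.Icc 1 B.nv := by
    intro s I hI x hx
    rw [mem_shift] at hx
    have := hI hx.2
    rw [comp_nv, Finset.mem_Icc] at this
    rw [Finset.mem_Icc]; omega
  simp_rw [Finset.sum_sigma']
  refine Finset.sum_bij'
    (fun x _ => ⟨x.2 ∩ Finset.Icc 1 A.nv, shift x.2 A.nv,
      res A B (x.2 ∩ Finset.Icc 1 A.nv) (shift x.2 A.nv) x.1,
      res A B (Finset.Icc 1 A.nv \ (x.2 ∩ Finset.Icc 1 A.nv)) (Finset.Icc 1 B.nv \ shift x.2 A.nv) x.1⟩)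
    (fun x _ => ⟨lft A B x.1 x.2.1 x.2.2.1 ∪
      lft A B (Finset.Icc 1 A.nv \ x.1) (Finset.Icc 1 B.nv \ x.2.1) x.2.2.2,
      glue A x.1 x.2.1⟩) ?_ ?_ ?_ ?_ ?_
  · rintro ⟨s, I⟩ hx
    simp only [Finset.mem_sigma, mem_isoF, mem_matchings] at hx ⊢
    obtain ⟨hs, h1, h2⟩ := hx
    have h3 := hsh s I h1
    rw [comp_nv] at h1
    have h4 : I ∩ Finset.Icc 1 A.nv ⊆ Finset.Icc 1 A.nv := Finset.inter_subset_right
    rw [← glue_unglue h1, iso_comp hA hB hs h4 (zero_notMem h3)] at h2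
    exact ⟨⟨h4, h2.1⟩, ⟨h3, h2.2.1⟩, res_matching hA hB hs h2.1 h2.2.1,
      res_matching hA hB hs (iso_compl hA h2.1) (iso_compl hB h2.2.1)⟩
  · rintro ⟨I, J, s, t⟩ hx
    simp only [Finset.mem_sigma, mem_isoF, mem_matchings] at hx ⊢
    obtain ⟨⟨h1, h2⟩, ⟨h3, h4⟩, hs, ht⟩ := hx
    have hm := lft_matching hA hB h2 h4 hs ht
    exact ⟨hm, by rw [comp_nv]; exact glue_subset h1 h3,
      (iso_comp hA hB hm h1 (zero_notMem h3)).2 ⟨h2, h4, lft_resp⟩⟩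
  · rintro ⟨s, I⟩ hx
    simp only [Finset.mem_sigma, mem_isoF, mem_matchings] at hx ⊢
    obtain ⟨hs, h1, h2⟩ := hx
    have h3 := hsh s I h1
    rw [comp_nv] at h1
    have h4 : I ∩ Finset.Icc 1 A.nv ⊆ Finset.Icc 1 A.nv := Finset.inter_subset_right
    rw [← glue_unglue h1, iso_comp hA hB hs h4 (zero_notMem h3)] at h2
    rw [lft_res hA hB hs h2.2.2, glue_unglue h1]
  · rintro ⟨I, J, s, t⟩ hx
    simp only [Finset.mem_sigma, mem_isoF, mem_matchings] at hx ⊢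
    obtain ⟨⟨h1, h2⟩, ⟨h3, h4⟩, hs, ht⟩ := hx
    rw [unglue1 h1 h3, unglue2 h1 h3, res_lft1 hA hB h2 h4 hs, res_lft2 hA hB h2 h4 ht]
  · rintro ⟨s, I⟩ hx
    simp only [Finset.mem_sigma, mem_isoF, mem_matchings] at hx ⊢
    obtain ⟨hs, h1, h2⟩ := hx
    have h3 := hsh s I h1
    rw [comp_nv] at h1
    have h4 : I ∩ Finset.Icc 1 A.nv ⊆ Finset.Icc 1 A.nv := Finset.inter_subset_right
    rw [← sub_comp hA hB hs h4 (zero_notMem h3), glue_unglue h1,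
      ← sub_comp hA hB hs Finset.sdiff_subset (zero_notMem (n := B.nv) Finset.sdiff_subset),
      ← glue_compl h4 h3, glue_unglue h1, comp_nv]

end

end BDH


namespace BDH
open BD
open scoped TensorProduct

theorem mkB_valid {G : BD} (h : G.Valid) : mkB G = Finsupp.single ⟨G, h⟩ 1 := by
  rw [mkB, dif_pos h]

theorem liftB_mkB {V : Type*} [AddCommMonoid V] [Module ℂ V] (f : BDiagram → V) {G : BD} (h : G.Valid) :
    liftB f (mkB G) = f ⟨G, h⟩ := by
  rw [mkB_valid h, liftB, Finsupp.lsum_single]; simp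

theorem lin_ext {V : Type*} [AddCommMonoid V] [Module ℂ V] {f g : BSpace →ₗ[ℂ] V}
    (h : ∀ G : BD, G.Valid → f (mkB G) = g (mkB G)) : f = g := by
  refine Finsupp.lhom_ext' fun a => LinearMap.ext_ring ?_
  have := h a.1 a.2
  rwa [mkB_valid a.2] at this

theorem unitB_eq : unitB = mkB eps := by rw [mkB_valid eps_valid]; rfl

theorem star_mk {A B : BD} (hA : A.Valid) (hB : B.Valid) :
    starB (mkB A) (mkB B) = ∑ s ∈ matchings A B, mkB (A.comp B s) := by
  rw [starB, liftB_mkB _ hA, liftB_mkB _ hB]; rfl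

theorem delta_mk {A : BD} (hA : A.Valid) :
    deltaL (mkB A) = ∑ I ∈ isoF A, mkB (A.sub I) ⊗ₜ[ℂ] mkB (A.sub (Finset.Icc 1 A.nv \ I)) := by
  rw [deltaL, liftB_mkB _ hA]; rfl

theorem counit_mk {A : BD} (hA : A.Valid) : counitB (mkB A) = if A = eps then 1 else 0 := by
  rw [counitB, liftB_mkB _ hA]

theorem isoF_valid {G : BD} (h : G.Valid) {I : Finset ℕ} (hI : I ∈ isoF G) : (G.sub I).Valid :=
  sub_valid h (zero_notMem (mem_isoF.1 hI).1)

theorem isoF_compl {G : BD} (h : G.Valid) {I : Finset ℕ} (hI : I ∈ isoF G) :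
    Finset.Icc 1 G.nv \ I ∈ isoF G := by
  rw [mem_isoF] at *; exact ⟨Finset.sdiff_subset, iso_compl h hI.2⟩

theorem isoF_valid' {G : BD} (h : G.Valid) {I : Finset ℕ} (hI : I ∈ isoF G) :
    (G.sub (Finset.Icc 1 G.nv \ I)).Valid := isoF_valid h (isoF_compl h hI)

theorem empty_isoF (G : BD) : ∅ ∈ isoF G := by
  rw [mem_isoF]; exact ⟨by simp, fun p hp => by simp⟩

theorem full_isoF {G : BD} (h : G.Valid) : Finset.Icc 1 G.nv ∈ isoF G := by
  simpa using isoF_compl h (empty_isoF G)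

theorem star_assoc (u v w : BSpace) : starB (starB u v) w = starB u (starB v w) := by
  have key : ∀ A B C : BD, A.Valid → B.Valid → C.Valid →
      starB (starB (mkB A) (mkB B)) (mkB C) = starB (mkB A) (starB (mkB B) (mkB C)) := by
    intro A B C hA hB hC
    rw [star_mk hA hB, star_mk hB hC]
    simp only [map_sum, LinearMap.sum_apply]
    rw [Finset.sum_congr rfl fun s hs => star_mk (comp_valid hA hB (mem_matchings.1 hs)) hC,
      Finset.sum_congr rfl fun s hs => star_mk hA (comp_valid hB hC (mem_matchings.1 hs))]
    exact sum_assoc hA hB hC mkB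
  have k1 : ∀ A B : BD, A.Valid → B.Valid → ∀ w,
      starB (starB (mkB A) (mkB B)) w = starB (mkB A) (starB (mkB B) w) := by
    intro A B hA hB w
    have := lin_ext (f := starB (starB (mkB A) (mkB B))) (g := starB (mkB A) ∘ₗ starB (mkB B))
      (fun C hC => key A B C hA hB hC)
    exact LinearMap.congr_fun this w
  have k2 : ∀ A : BD, A.Valid → ∀ v w,
      starB (starB (mkB A) v) w = starB (mkB A) (starB v w) := by
    intro A hA v w
    have := lin_ext (f := starB.flip w ∘ₗ starB (mkB A)) (g := starB (mkB A) ∘ₗ starB.flip w)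
      (fun B hB => k1 A B hA hB w)
    exact LinearMap.congr_fun this v
  have := lin_ext (f := starB.flip w ∘ₗ starB.flip v) (g := starB.flip (starB v w))
      (fun A hA => k2 A hA v w)
  exact LinearMap.congr_fun this u

theorem one_star (u : BSpace) : starB unitB u = u := by
  have := lin_ext (f := starB unitB) (g := LinearMap.id) (fun A hA => by
    rw [unitB_eq, star_mk eps_valid hA, matchings_eps_left, Finset.sum_singleton, comp_eps_left]; rfl)
  exact LinearMap.congr_fun this u

theorem star_one (u : BSpace) : starB u unitB = u := by
  have := lin_ext (f := starB.flip unitB) (g := LinearMap.id) (fun A hA => by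
    rw [LinearMap.flip_apply, unitB_eq, star_mk hA eps_valid, matchings_eps_right,
      Finset.sum_singleton, comp_eps_right]; rfl)
  exact LinearMap.congr_fun this u

theorem coassoc : (TensorProduct.assoc ℂ BSpace BSpace BSpace).toLinearMap ∘ₗ
        TensorProduct.map deltaL LinearMap.id ∘ₗ deltaL =
      TensorProduct.map LinearMap.id deltaL ∘ₗ deltaL := by
  refine lin_ext fun G h => ?_
  simp only [LinearMap.comp_apply, delta_mk h, map_sum, TensorProduct.map_tmul, LinearMap.id_apply,
    LinearEquiv.coe_coe]
  refine Eq.trans ?_ ((sum_coassoc h (fun X Y Z => mkB X ⊗ₜ[ℂ] (mkB Y ⊗ₜ[ℂ] mkB Z))).trans ?_)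
  · refine Finset.sum_congr rfl fun I hI => ?_
    rw [delta_mk (isoF_valid h hI), TensorProduct.sum_tmul, map_sum]
    simp only [TensorProduct.assoc_tmul]
  · refine Finset.sum_congr rfl fun I hI => ?_
    rw [delta_mk (isoF_valid' h hI), TensorProduct.tmul_sum]

theorem counit_left : (TensorProduct.lid ℂ BSpace).toLinearMap ∘ₗ
        TensorProduct.map counitB LinearMap.id ∘ₗ deltaL = LinearMap.id := by
  refine lin_ext fun G h => ?_
  simp only [LinearMap.comp_apply, delta_mk h, map_sum, TensorProduct.map_tmul, LinearMap.id_apply,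
    LinearEquiv.coe_coe, TensorProduct.lid_tmul]
  rw [Finset.sum_eq_single ∅]
  · rw [sub_empty h, counit_mk eps_valid, if_pos rfl, one_smul, Finset.sdiff_empty, sub_full h]
  · intro I hI hne
    rw [counit_mk (isoF_valid h hI), if_neg, zero_smul]
    rwa [sub_eq_eps h (mem_isoF.1 hI).1]
  · intro hh; exact absurd (empty_isoF G) hh

theorem counit_right : (TensorProduct.rid ℂ BSpace).toLinearMap ∘ₗ
        TensorProduct.map LinearMap.id counitB ∘ₗ deltaL = LinearMap.id := by
  refine lin_ext fun G h => ?_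
  simp only [LinearMap.comp_apply, delta_mk h, map_sum, TensorProduct.map_tmul, LinearMap.id_apply,
    LinearEquiv.coe_coe, TensorProduct.rid_tmul]
  rw [Finset.sum_eq_single (Finset.Icc 1 G.nv)]
  · rw [Finset.sdiff_self, sub_empty h, counit_mk eps_valid, if_pos rfl, one_smul, sub_full h]
  · intro I hI hne
    rw [counit_mk (isoF_valid' h hI), if_neg, zero_smul]
    rw [sub_eq_eps h Finset.sdiff_subset, Finset.sdiff_eq_empty_iff_subset]
    exact fun h1 => hne (subset_antisymm (mem_isoF.1 hI).1 h1)
  · intro hh; exact absurd (full_isoF h) hh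

noncomputable def star2L : (BSpace ⊗[ℂ] BSpace) →ₗ[ℂ] (BSpace ⊗[ℂ] BSpace) →ₗ[ℂ] (BSpace ⊗[ℂ] BSpace) :=
  TensorProduct.curry (TensorProduct.map muB muB ∘ₗ
    (TensorProduct.tensorTensorTensorComm ℂ BSpace BSpace BSpace BSpace).toLinearMap)

theorem star2L_apply (x y) : star2L x y = star2 x y := rfl

theorem muB_tmul (x y) : muB (x ⊗ₜ[ℂ] y) = starB x y := by simp [muB]

theorem star2_tmul (a b c d : BSpace) :
    star2 (a ⊗ₜ[ℂ] b) (c ⊗ₜ[ℂ] d) = starB a c ⊗ₜ[ℂ] starB b d := by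
  simp [star2, muB_tmul]

theorem delta_mul (u v : BSpace) : deltaL (starB u v) = star2 (deltaL u) (deltaL v) := by
  have key : ∀ A B : BD, A.Valid → B.Valid →
      deltaL (starB (mkB A) (mkB B)) = star2L (deltaL (mkB A)) (deltaL (mkB B)) := by
    intro A B hA hB
    rw [star_mk hA hB, delta_mk hA, delta_mk hB]
    simp only [map_sum, LinearMap.sum_apply, star2L_apply, star2_tmul]
    rw [Finset.sum_congr rfl fun s hs => delta_mk (comp_valid hA hB (mem_matchings.1 hs)),
      sum_mul hA hB (fun X Y => mkB X ⊗ₜ[ℂ] mkB Y), Finset.sum_comm]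
    refine Finset.sum_congr rfl fun I hI => Finset.sum_congr rfl fun J hJ => ?_
    rw [star_mk (isoF_valid hA ‹_›) (isoF_valid hB ‹_›), star_mk (isoF_valid' hA ‹_›) (isoF_valid' hB ‹_›),
      TensorProduct.sum_tmul]
    simp only [TensorProduct.tmul_sum]
  have k1 : ∀ A : BD, A.Valid → ∀ w,
      deltaL (starB (mkB A) w) = star2L (deltaL (mkB A)) (deltaL w) := by
    intro A hA w
    have := lin_ext (f := deltaL ∘ₗ starB (mkB A)) (g := star2L (deltaL (mkB A)) ∘ₗ deltaL)
      (fun B hB => key A B hA hB)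
    exact LinearMap.congr_fun this w
  have := lin_ext (f := deltaL ∘ₗ starB.flip v) (g := star2L.flip (deltaL v) ∘ₗ deltaL)
      (fun A hA => k1 A hA v)
  exact LinearMap.congr_fun this u

theorem isoF_eps : isoF eps = {∅} := by
  ext I; rw [mem_isoF]
  constructor
  · rintro ⟨h, -⟩; simpa [BD.nv, eps] using h
  · intro h; rw [Finset.mem_singleton] at h; subst h; exact mem_isoF.1 (empty_isoF _)

theorem delta_unit : deltaL unitB = unitB ⊗ₜ[ℂ] unitB := by
  rw [unitB_eq, delta_mk eps_valid, isoF_eps, Finset.sum_singleton, sub_empty eps_valid,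
    Finset.sdiff_empty, sub_full eps_valid]

theorem counit_unit : counitB unitB = 1 := by
  rw [unitB_eq, counit_mk eps_valid, if_pos rfl]

theorem counit_mul (u v : BSpace) : counitB (starB u v) = counitB u * counitB v := by
  have key : ∀ A B : BD, A.Valid → B.Valid →
      counitB (starB (mkB A) (mkB B)) = counitB (mkB A) * counitB (mkB B) := by
    intro A B hA hB
    by_cases hh : A = eps
    · subst hh; rw [← unitB_eq, one_star, counit_unit, one_mul]
    · rw [star_mk hA hB, counit_mk hA, if_neg hh, zero_mul, map_sum]
      refine Finset.sum_eq_zero fun s hs => ?_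
      rw [counit_mk (comp_valid hA hB (mem_matchings.1 hs)), if_neg]
      intro h1
      have := comp_nv A B s
      rw [h1] at this
      apply hh
      apply eq_eps hA
      have h2 : eps.nv = 0 := rfl
      omega
  have k1 : ∀ A : BD, A.Valid → ∀ w,
      counitB (starB (mkB A) w) = counitB (mkB A) * counitB w := by
    intro A hA w
    have := lin_ext (f := counitB ∘ₗ starB (mkB A)) (g := counitB (mkB A) • counitB)
      (fun B hB => key A B hA hB)
    exact LinearMap.congr_fun this w
  have := lin_ext (f := counitB ∘ₗ starB.flip v) (g := ((LinearMap.mul ℂ ℂ).flip (counitB v)) ∘ₗ counitB)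
      (fun A hA => k1 A hA v)
  exact LinearMap.congr_fun this u

end BDH


namespace BDH
open BD
open scoped TensorProduct

noncomputable def conv (f g : BSpace →ₗ[ℂ] BSpace) : BSpace →ₗ[ℂ] BSpace :=
  muB ∘ₗ TensorProduct.map f g ∘ₗ deltaL

theorem conv_mk (f g : BSpace →ₗ[ℂ] BSpace) {G : BD} (h : G.Valid) :
    conv f g (mkB G) = ∑ I ∈ isoF G,
      starB (f (mkB (G.sub I))) (g (mkB (G.sub (Finset.Icc 1 G.nv \ I)))) := by
  simp only [conv, LinearMap.comp_apply, delta_mk h, map_sum, TensorProduct.map_tmul, muB_tmul]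

theorem conv_assoc (f g k : BSpace →ₗ[ℂ] BSpace) : conv (conv f g) k = conv f (conv g k) := by
  refine lin_ext fun G h => ?_
  rw [conv_mk _ _ h, conv_mk _ _ h]
  refine Eq.trans ?_ ((sum_coassoc h (fun X Y Z => starB (f (mkB X)) (starB (g (mkB Y)) (k (mkB Z))))).trans ?_)
  · refine Finset.sum_congr rfl fun I hI => ?_
    rw [conv_mk _ _ (isoF_valid h hI), map_sum, LinearMap.sum_apply]
    simp only [star_assoc]
  · refine Finset.sum_congr rfl fun I hI => ?_
    rw [conv_mk _ _ (isoF_valid' h hI), map_sum]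

noncomputable def eL : BSpace →ₗ[ℂ] BSpace := (LinearMap.toSpanSingleton ℂ BSpace unitB) ∘ₗ counitB

theorem eL_apply (x) : eL x = counitB x • unitB := rfl

theorem eL_conv (f) : conv eL f = f := by
  refine lin_ext fun G h => ?_
  have := congrArg f (LinearMap.congr_fun counit_left (mkB G))
  simp only [LinearMap.comp_apply, delta_mk h, map_sum, TensorProduct.map_tmul, LinearMap.id_apply,
    LinearEquiv.coe_coe, TensorProduct.lid_tmul, map_smul] at this
  rw [conv_mk _ _ h, ← this]
  simp only [eL_apply, map_smul, LinearMap.smul_apply, one_star]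

theorem conv_eL (f) : conv f eL = f := by
  refine lin_ext fun G h => ?_
  have := congrArg f (LinearMap.congr_fun counit_right (mkB G))
  simp only [LinearMap.comp_apply, delta_mk h, map_sum, TensorProduct.map_tmul, LinearMap.id_apply,
    LinearEquiv.coe_coe, TensorProduct.rid_tmul, map_smul] at this
  rw [conv_mk _ _ h, ← this]
  simp only [eL_apply, map_smul, star_one]

noncomputable def nf : BSpace →ₗ[ℂ] BSpace := eL - LinearMap.id

theorem nf_eps : nf (mkB eps) = 0 := by
  rw [nf, LinearMap.sub_apply, eL_apply, ← unitB_eq, counit_unit]; simp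

theorem conv_nf (f) : conv f nf = f - conv f LinearMap.id := by
  refine lin_ext fun G h => ?_
  have h1 := LinearMap.congr_fun (conv_eL f) (mkB G)
  rw [LinearMap.sub_apply, ← h1]
  simp only [conv_mk _ _ h, nf, LinearMap.sub_apply, map_sub, Finset.sum_sub_distrib]

theorem nf_conv (f) : conv nf f = f - conv LinearMap.id f := by
  refine lin_ext fun G h => ?_
  have h1 := LinearMap.congr_fun (eL_conv f) (mkB G)
  rw [LinearMap.sub_apply, ← h1]
  simp only [conv_mk _ _ h, nf, LinearMap.sub_apply, map_sub, Finset.sum_sub_distrib]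

theorem nv_lt {G : BD} {I : Finset ℕ} (hI : I ∈ isoF G) (hne : I ≠ Finset.Icc 1 G.nv) :
    (G.sub I).nv < G.nv := by
  rw [mem_isoF] at hI
  rw [sub_nv hI.1]
  simpa using Finset.card_lt_card (Finset.ssubset_iff_subset_ne.2 ⟨hI.1, hne⟩)

theorem conv_nf_congr {f g : BSpace →ₗ[ℂ] BSpace} {G : BD} (h : G.Valid)
    (hfg : ∀ H : BD, H.Valid → H.nv < G.nv → f (mkB H) = g (mkB H)) :
    conv f nf (mkB G) = conv g nf (mkB G) := by
  rw [conv_mk _ _ h, conv_mk _ _ h]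
  refine Finset.sum_congr rfl fun I hI => ?_
  by_cases hne : I = Finset.Icc 1 G.nv
  · rw [hne, Finset.sdiff_self, sub_empty h, nf_eps, map_zero, map_zero]
  · rw [hfg _ (isoF_valid h hI) (nv_lt hI hne)]

theorem nf_conv_congr {f g : BSpace →ₗ[ℂ] BSpace} {G : BD} (h : G.Valid)
    (hfg : ∀ H : BD, H.Valid → H.nv < G.nv → f (mkB H) = g (mkB H)) :
    conv nf f (mkB G) = conv nf g (mkB G) := by
  rw [conv_mk _ _ h, conv_mk _ _ h]
  refine Finset.sum_congr rfl fun I hI => ?_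
  by_cases hne : Finset.Icc 1 G.nv \ I = Finset.Icc 1 G.nv
  · have : I = ∅ := by
      have := Finset.inter_eq_right.2 (mem_isoF.1 hI).1
      rw [← this]; exact Finset.disjoint_iff_inter_eq_empty.1 (Finset.sdiff_eq_self_iff_disjoint.1 hne)
    rw [this, sub_empty h, nf_eps, map_zero, LinearMap.zero_apply, LinearMap.zero_apply]
  · rw [hfg _ (isoF_valid' h hI) (nv_lt (isoF_compl h hI) hne)]

theorem fixpoint (Φ : (BSpace →ₗ[ℂ] BSpace) → (BSpace →ₗ[ℂ] BSpace))
    (hΦ : ∀ (f g : BSpace →ₗ[ℂ] BSpace) (G : BD), G.Valid →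
      (∀ H : BD, H.Valid → H.nv < G.nv → f (mkB H) = g (mkB H)) → Φ f (mkB G) = Φ g (mkB G)) :
    ∃ S, Φ S = S := by
  have stab : ∀ N : ℕ, ∀ G : BD, G.Valid → G.nv < N → ∀ m, N ≤ m →
      (Φ^[m] 0) (mkB G) = (Φ^[N] 0) (mkB G) := by
    intro N
    induction N with
    | zero => intro G _ h; omega
    | succ N ih =>
      intro G hG hn m hm
      obtain ⟨m, rfl⟩ : ∃ k, m = k + 1 := ⟨m - 1, by omega⟩
      rw [Function.iterate_succ_apply', Function.iterate_succ_apply']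
      exact hΦ _ _ _ hG fun H hH hl => ih H hH (by omega) m (by omega)
  have hS : ∀ G : BD, ∀ h : G.Valid, liftB (fun A => (Φ^[A.1.nv + 1] 0) (mkB A.1)) (mkB G) =
      (Φ^[G.nv + 1] 0) (mkB G) := fun G h => liftB_mkB _ h
  refine ⟨liftB (fun A => (Φ^[A.1.nv + 1] 0) (mkB A.1)), lin_ext fun G h => ?_⟩
  rw [hS G h, Function.iterate_succ_apply']
  refine hΦ _ _ _ h fun H hH hl => ?_
  rw [hS H hH]
  exact (stab (H.nv + 1) H hH (by omega) G.nv (by omega)).symm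

theorem antipode : ∃ S : BSpace →ₗ[ℂ] BSpace, conv S LinearMap.id = eL ∧ conv LinearMap.id S = eL := by
  obtain ⟨S, hS⟩ := fixpoint (fun f => eL + conv f nf) (fun f g G h hfg => by
    simp only [LinearMap.add_apply, conv_nf_congr h hfg])
  obtain ⟨T, hT⟩ := fixpoint (fun f => eL + conv nf f) (fun f g G h hfg => by
    simp only [LinearMap.add_apply, nf_conv_congr h hfg])
  have h1 : conv S LinearMap.id = eL := by
    rw [conv_nf] at hS
    have : eL - conv S LinearMap.id = 0 := by
      rw [← sub_eq_zero] at hS; rw [← hS]; abel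
    exact (sub_eq_zero.1 this).symm
  have h2 : conv LinearMap.id T = eL := by
    rw [nf_conv] at hT
    have : eL - conv LinearMap.id T = 0 := by
      rw [← sub_eq_zero] at hT; rw [← hT]; abel
    exact (sub_eq_zero.1 this).symm
  have : S = T := by
    rw [← conv_eL S, ← h2, ← conv_assoc, h1, eL_conv]
  exact ⟨S, h1, this ▸ h2⟩

end BDH

/-- `(ℬ, ⋆, ε, Δ, ε*)` is a Hopf algebra: it is a bialgebra and
it admits an antipode `S`. -/
theorem bspace_hopf :
    (∀ u v w : BSpace, starB (starB u v) w = starB u (starB v w)) ∧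
    (∀ u : BSpace, starB unitB u = u ∧ starB u unitB = u) ∧
    ((TensorProduct.assoc ℂ BSpace BSpace BSpace).toLinearMap ∘ₗ
        TensorProduct.map deltaL LinearMap.id ∘ₗ deltaL =
      TensorProduct.map LinearMap.id deltaL ∘ₗ deltaL) ∧
    ((TensorProduct.lid ℂ BSpace).toLinearMap ∘ₗ
        TensorProduct.map counitB LinearMap.id ∘ₗ deltaL = LinearMap.id) ∧
    ((TensorProduct.rid ℂ BSpace).toLinearMap ∘ₗ
        TensorProduct.map LinearMap.id counitB ∘ₗ deltaL = LinearMap.id) ∧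
    (∀ u v : BSpace, deltaL (starB u v) = star2 (deltaL u) (deltaL v)) ∧
    deltaL unitB = unitB ⊗ₜ[ℂ] unitB ∧
    (∀ u v : BSpace, counitB (starB u v) = counitB u * counitB v) ∧
    counitB unitB = 1 ∧
    (∃ S : BSpace →ₗ[ℂ] BSpace, ∀ x : BSpace,
      muB (TensorProduct.map S LinearMap.id (deltaL x)) = counitB x • unitB ∧
      muB (TensorProduct.map LinearMap.id S (deltaL x)) = counitB x • unitB) := by
  refine ⟨BDH.star_assoc, fun u => ⟨BDH.one_star u, BDH.star_one u⟩, BDH.coassoc, BDH.counit_left,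
    BDH.counit_right, BDH.delta_mul, BDH.delta_unit, BDH.counit_mul, BDH.counit_unit, ?_⟩
  obtain ⟨S, h1, h2⟩ := BDH.antipode
  exact ⟨S, fun x => ⟨LinearMap.congr_fun h1 x, LinearMap.congr_fun h2 x⟩⟩
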